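/- arXiv:1711.11469 — 2 statements merged into one kernel-verified Lean document; each statement's English description precedes it below -/
import Mathlib

section
/- Let n ≥ 6 be an integer and let k be a real number with 1 ≤ k ≤ n such that k is not an integer or n/k is not an integer. Set ρ = 1 − (n/k − 1)/(n − 1), t(n,ρ) = C(n,3) − (n(n−1)(1−ρ)/6)·((1+2ρ)n − 2 − 2ρ), and d = 2⌊min{k, n/k}⌋ + 2. Then there do not exist polynomials f_{ij} (for 1 ≤ i < j ≤ n), f, h, and a finite family g₁, …, g_m in ℝ[x_{ij} : 1 ≤ i < j ≤ n] such that −1 = Σ_{i<j} f_{ij}·(x_{ij}² − x_{ij}) + f·(Σ_{i<j} x_{ij} − ρ·C(n,2)) + h·(Σ_{i<j<l} x_{ij}x_{il}x_{jl} − t(n,ρ)) + Σ_{t=1}^{m} g_t², where indexdeg(f_{ij}) ≤ d − 2, indexdeg(f) ≤ d − 2, indexdeg(h) ≤ d − 3, and 2·indexdeg(g_t) ≤ d for all t. -/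
open MvPolynomial Finset

/-- The edges of the complete graph `Kₙ`: 2-element subsets of `{1,…,n}`. -/
abbrev KEdge (n : ℕ) := {e : Finset (Fin n) // e.card = 2}

/-- The index degree of a polynomial in the variables `x_e` indexed by edges of `Kₙ`. -/
noncomputable def indexDeg {n : ℕ} (p : MvPolynomial (KEdge n) ℝ) : ℕ :=
  p.support.sup fun d => (d.support.biUnion fun e => (e : Finset (Fin n))).card

/-!
Color the vertices of `Kₙ` at random with `k` color classes of size `m = n / k` each. The complete
multipartite graph whose parts are the color classes then has edge density `ρ` and attains Goodman's
bound. For real `k` and `m` there is no such coloring, but the joint density of the colors of any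
set of vertices is still given by products of falling factorials, and these formulas define a
pseudo-expectation `E` on the functions of a coloring. It satisfies the constraints because the
class of any given vertex has size `m` from the point of view of `E`.

The density of the colors of at most `s` vertices is nonnegative as long as `s ≤ k + 1` and
`s ≤ m + 1`, but a square of degree `s` involves up to `2 * s` vertices at a time. If the
quadratic form `F ↦ E (F * F)` were negative somewhere in degree `s`, it would have an eigenvector
`G` with negative eigenvalue, and `G` would correlate with a function of some set `I` of at most `s`
vertices. By symmetry, the average of `G` over the permutations fixing `I` pointwise is still an
eigenvector. Modulo functions that `E` does not see, it depends only on the colors of `I`, where `E`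
is an honest nonnegative measure: a contradiction.
-/

namespace TriangleProblem

open Function

open scoped BigOperators

variable {V : Type*} [DecidableEq V] {U : Finset V} {i : V}

section ClassSize

/-- The number of vertices of `U` that receive the color `v` from the coloring `c`. -/
def classSize (U : Finset V) (c : V → V) (v : V) : ℕ := #{i ∈ U | c i = v}

lemma classSize_eq_zero {c : V → V} {v : V} (hv : v ∉ U.image c) : classSize U c v = 0 := by
  simpa [classSize, filter_eq_empty_iff] using hv

lemma classSize_insert_update (hi : i ∉ U) (c : V → V) (v w : V) :
    classSize (insert i U) (update c i v) w = classSize U c w + if v = w then 1 else 0 := by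
  have hU : {j ∈ U | update c i v j = w} = {j ∈ U | c j = w} :=
    filter_congr fun j hj ↦ by rw [update_of_ne (ne_of_mem_of_not_mem hj hi)]
  rw [classSize, filter_insert, update_self, hU]
  split_ifs <;> simp [classSize, hi]

lemma image_insert_update (hi : i ∉ U) (c : V → V) (v : V) :
    (insert i U).image (update c i v) = insert v (U.image c) := by
  rw [image_insert, update_self]
  exact congrArg _ (image_congr fun j hj ↦ update_of_ne (ne_of_mem_of_not_mem hj hi) _ _)

lemma dependsOn_classSize (U : Finset V) : DependsOn (classSize U) (U : Set V) := fun c c' h ↦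
  funext fun v ↦ congrArg card (filter_congr fun i hi ↦ by rw [h i hi])

lemma classSize_sdiff_add {A : Finset V} (hAU : A ⊆ U) (c : V → V) (v : V) :
    classSize (U \ A) c v + classSize A c v = classSize U c v := by
  rw [classSize, classSize, classSize, ← card_union_of_disjoint
    (disjoint_filter_filter sdiff_disjoint), ← filter_union, sdiff_union_of_subset hAU]

end ClassSize

section Patterns

/-- The functions of a coloring that only see which vertices of `U` share a color. -/
def patternAlgebra (U : Finset V) : Subalgebra ℝ ((V → V) → ℝ) where
  carrier := {F | DependsOn F (U : Set V) ∧ ∀ (π : Equiv.Perm V) (c : V → V), F (π ∘ c) = F c}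
  mul_mem' {F G} hF hG :=
    ⟨fun c c' h ↦ by rw [Pi.mul_apply, Pi.mul_apply, hF.1 h, hG.1 h],
      fun π c ↦ by rw [Pi.mul_apply, Pi.mul_apply, hF.2, hG.2]⟩
  add_mem' {F G} hF hG :=
    ⟨fun c c' h ↦ by rw [Pi.add_apply, Pi.add_apply, hF.1 h, hG.1 h],
      fun π c ↦ by rw [Pi.add_apply, Pi.add_apply, hF.2, hG.2]⟩
  algebraMap_mem' _ := ⟨fun _ _ _ ↦ rfl, fun _ _ ↦ rfl⟩

/-- `F` with the color of `j` replaced by the color of `i`. -/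
def substVertex (F : (V → V) → ℝ) (j i : V) (c : V → V) : ℝ := F (update c j (c i))

variable {A : Finset V} {j : V} {F : (V → V) → ℝ}

omit [DecidableEq V] in
lemma patternAlgebra_mono {A B : Finset V} (h : A ⊆ B) : patternAlgebra A ≤ patternAlgebra B :=
  fun _ hF ↦ ⟨hF.1.mono (coe_subset.2 h), hF.2⟩

lemma indicator_mem_patternAlgebra {a b : V} (ha : a ∈ U) (hb : b ∈ U) :
    (fun c : V → V ↦ if c a = c b then (1 : ℝ) else 0) ∈ patternAlgebra U :=
  ⟨fun c c' h ↦ by simp only [h a ha, h b hb],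
    fun π c ↦ by simp only [comp_apply, EmbeddingLike.apply_eq_iff_eq]⟩

lemma dependsOn_substVertex (hF : DependsOn F (insert j A : Finset V)) (i : V) :
    DependsOn (substVertex F j i) (insert i A : Finset V) := fun c c' h ↦ hF fun a ha ↦ by
  rcases eq_or_ne a j with rfl | haj
  · simpa using h i (mem_insert_self i A)
  · simpa [haj] using h a (mem_insert_of_mem (mem_of_mem_insert_of_ne ha haj))

lemma substVertex_mem_patternAlgebra (hF : F ∈ patternAlgebra (insert j A)) (i : V) :
    substVertex F j i ∈ patternAlgebra (insert i A) :=
  ⟨dependsOn_substVertex hF.1 i, fun π c ↦ by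
    rw [substVertex, comp_apply, ← comp_update, hF.2, substVertex]⟩

lemma apply_update_eq_of_mem_patternAlgebra (hF : F ∈ patternAlgebra (insert j A)) {c : V → V}
    {v w : V} (hv : v ∉ A.image c) (hw : w ∉ A.image c) : F (update c j v) = F (update c j w) := by
  rw [← hF.2 (Equiv.swap v w)]
  refine hF.1 fun a ha ↦ ?_
  rcases eq_or_ne a j with rfl | haj
  · simp
  · have hca := mem_image_of_mem c (mem_of_mem_insert_of_ne (mem_coe.1 ha) haj)
    simp [haj, Equiv.swap_apply_of_ne_of_ne (ne_of_mem_of_not_mem hca hv)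
      (ne_of_mem_of_not_mem hca hw)]

/-- The span of the functions whose pattern involves at most `s` vertices. -/
def lowDegree (V : Type*) (s : ℕ) : Submodule ℝ ((V → V) → ℝ) :=
  Submodule.span ℝ {F | ∃ U : Finset V, #U ≤ s ∧ F ∈ patternAlgebra U}

omit [DecidableEq V] in
lemma mem_lowDegree {s : ℕ} (hU : #U ≤ s) (hF : F ∈ patternAlgebra U) : F ∈ lowDegree V s :=
  Submodule.subset_span ⟨U, hU, hF⟩

end Patterns

section Relabel

/-- The action on functions of a coloring induced by a permutation of the vertices. -/
def relabel (σ : Equiv.Perm V) : ((V → V) → ℝ) →ₗ[ℝ] ((V → V) → ℝ) :=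
  LinearMap.funLeft ℝ ℝ fun c ↦ c ∘ σ

variable {A : Finset V} {j : V} {F : (V → V) → ℝ}

omit [DecidableEq V] in
lemma relabel_mul_apply (σ τ : Equiv.Perm V) (F : (V → V) → ℝ) :
    relabel (σ * τ) F = relabel σ (relabel τ F) := rfl

omit [DecidableEq V] in
lemma relabel_mul (σ : Equiv.Perm V) (F G : (V → V) → ℝ) :
    relabel σ (F * G) = relabel σ F * relabel σ G := rfl

lemma relabel_mem_patternAlgebra (hF : F ∈ patternAlgebra U) (σ : Equiv.Perm V) :
    relabel σ F ∈ patternAlgebra (U.image σ) :=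
  ⟨fun _ _ h ↦ hF.1 fun i hi ↦ h (σ i) (mem_coe.2 (mem_image_of_mem σ hi)),
    fun π c ↦ hF.2 π (c ∘ σ)⟩

lemma substVertex_eq_relabel_swap (hF : DependsOn F (insert j A : Finset V)) (hi : i ∉ A)
    (hj : j ∉ A) : substVertex F j i = relabel (Equiv.swap i j) F := by
  refine funext fun c ↦ hF fun a ha ↦ ?_
  rcases eq_or_ne a j with rfl | haj
  · simp
  · have haA : a ∈ A := mem_of_mem_insert_of_ne ha haj
    rw [update_of_ne haj]
    exact congrArg c (Equiv.swap_apply_of_ne_of_ne (ne_of_mem_of_not_mem haA hi) haj).symm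

end Relabel

section Rainbow

/-- The indicator function of the colorings that are injective on `S`. For a pair `S`, this is the
indicator of an edge of the complete multipartite graph whose parts are the color classes. -/
def rainbow (S : Finset V) (c : V → V) : ℝ := if #(S.image c) = #S then 1 else 0

variable {S : Finset V} {c : V → V} {a : V}

lemma rainbow_of_injOn (h : Set.InjOn c S) : rainbow S c = 1 := if_pos (card_image_iff.2 h)

lemma rainbow_of_not_injOn (h : ¬ Set.InjOn c S) : rainbow S c = 0 :=
  if_neg fun h' ↦ h (card_image_iff.1 h')

lemma rainbow_mul_self (S : Finset V) : rainbow S * rainbow S = rainbow S := by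
  ext c
  simp [rainbow]

lemma rainbow_mem_patternAlgebra (S : Finset V) : rainbow S ∈ patternAlgebra S :=
  ⟨fun c c' h ↦ by rw [rainbow, rainbow, image_congr h], fun π c ↦ by
    rw [rainbow, ← image_image, card_image_of_injective _ π.injective, rainbow]⟩

lemma classSize_of_injOn (h : Set.InjOn c S) (v : V) :
    classSize S c v = if v ∈ S.image c then 1 else 0 := by
  split_ifs with hv
  · obtain ⟨x, hx, rfl⟩ := mem_image.1 hv
    refine card_eq_one.2 ⟨x, ?_⟩
    ext y
    simp only [mem_filter, mem_singleton]
    exact ⟨fun hy ↦ h hy.1 hx hy.2, by rintro rfl; exact ⟨hx, rfl⟩⟩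
  · exact classSize_eq_zero hv

lemma rainbow_mul_one_sub_classSize (S : Finset V) (c : V → V) (a : V) :
    rainbow S c * (1 - classSize S c (c a)) = if a ∈ S then 0 else rainbow (insert a S) c := by
  by_cases h : Set.InjOn c S
  · rw [rainbow_of_injOn h, one_mul, classSize_of_injOn h]
    by_cases ha : a ∈ S
    · simp [ha, mem_image_of_mem c ha, -mem_image]
    · rw [if_neg ha, rainbow, image_insert, card_insert_of_notMem ha]
      by_cases hca : c a ∈ S.image c <;> simp [hca, card_image_of_injOn h]
  · have hinsert : ¬ Set.InjOn c (insert a S : Finset V) := fun h' ↦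
      h (h'.mono (coe_subset.2 (subset_insert a S)))
    rw [rainbow_of_not_injOn h, rainbow_of_not_injOn hinsert, zero_mul, ite_self]

end Rainbow

variable [Fintype V] {k m : ℝ}

section Density

/-- The conditional probability, up to the factor `1 / (n - #U)`, that the next vertex receives the
color `v` once the vertices of `U` are colored by `c`: a vertex joins a color class of size `b` with
weight `m - b`, and the weight of starting a new class is spread evenly over the unused colors. -/
noncomputable def colorWeight (k m : ℝ) (U : Finset V) (c : V → V) (v : V) : ℝ :=
  (m - classSize U c v) *
    if v ∈ U.image c then 1 else (k - #(U.image c)) / (Fintype.card V - #(U.image c))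

/-- The density, relative to the uniform measure on all colorings `V → V`, of the restriction to `U`
of a uniformly random coloring with `k` nonempty classes of size `m`. For real `k` and `m` this is
only a formula, which may take negative values. -/
noncomputable def density (k m : ℝ) (U : Finset V) (c : V → V) : ℝ :=
  (Fintype.card V : ℝ) ^ #U / (descPochhammer ℝ #U).eval (Fintype.card V : ℝ) *
    ((descPochhammer ℝ #(U.image c)).eval k /
      (descPochhammer ℝ #(U.image c)).eval (Fintype.card V : ℝ)) *
    ∏ v, (descPochhammer ℝ (classSize U c v)).eval m

/-- The linear functional with density `density k m U`. -/
noncomputable def marginal (k m : ℝ) (U : Finset V) : ((V → V) → ℝ) →ₗ[ℝ] ℝ where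
  toFun F := 𝔼 c, density k m U c * F c
  map_add' F G := by simp only [Pi.add_apply, mul_add, expect_add_distrib]
  map_smul' a F := by
    simp only [Pi.smul_apply, smul_eq_mul, RingHom.id_apply, mul_expect, mul_left_comm]

/-- The pseudo-expectation over all colorings with `k` classes of size `m`. -/
noncomputable def pseudoExp (k m : ℝ) : ((V → V) → ℝ) →ₗ[ℝ] ℝ := marginal k m univ

/-- The conditional expectation of `F` over the color of `i`, given that the vertices of `U` are
colored by `c`. -/
noncomputable def condExp (k m : ℝ) (U : Finset V) (i : V) (F : (V → V) → ℝ) (c : V → V) : ℝ :=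
  (∑ v, colorWeight k m U c v * F (update c i v)) / (Fintype.card V - #U)

lemma sum_classSize (U : Finset V) (c : V → V) : ∑ v, classSize U c v = #U :=
  (card_eq_sum_card_fiberwise fun _ _ ↦ mem_coe.2 (mem_univ _)).symm

lemma prod_descPochhammer_insert_update (hi : i ∉ U) (m : ℝ) (c : V → V) (v : V) :
    ∏ w, (descPochhammer ℝ (classSize (insert i U) (update c i v) w)).eval m =
      (∏ w, (descPochhammer ℝ (classSize U c w)).eval m) * (m - classSize U c v) := by
  have hrest : ∀ w ∈ univ.erase v,
      (descPochhammer ℝ (classSize (insert i U) (update c i v) w)).eval m =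
        (descPochhammer ℝ (classSize U c w)).eval m := fun w hw ↦ by
    rw [classSize_insert_update hi, if_neg (ne_of_mem_erase hw).symm, add_zero]
  rw [← mul_prod_erase _ _ (mem_univ v), ← mul_prod_erase _ (fun w ↦ _) (mem_univ v),
    prod_congr rfl hrest, classSize_insert_update hi, if_pos rfl, descPochhammer_succ_eval]
  ring

lemma density_insert_update (hi : i ∉ U) (c : V → V) (v : V) :
    density k m (insert i U) (update c i v) =
      Fintype.card V * (colorWeight k m U c v / (Fintype.card V - #U)) * density k m U c := by
  rw [density, density, colorWeight, prod_descPochhammer_insert_update hi, image_insert_update hi,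
    card_insert_of_notMem hi, descPochhammer_succ_eval, pow_succ]
  simp only [div_eq_mul_inv]
  split_ifs with hv
  · rw [insert_eq_of_mem hv, mul_inv]
    ring
  · rw [card_insert_of_notMem hv, descPochhammer_succ_eval, descPochhammer_succ_eval, mul_inv,
      mul_inv]
    ring

lemma sum_colorWeight (hkm : k * m = Fintype.card V) (hU : #U < Fintype.card V) (c : V → V) :
    ∑ v, colorWeight k m U c v = Fintype.card V - #U := by
  set r := #(U.image c) with hr
  have hrn : (r : ℝ) < Fintype.card V := by exact_mod_cast card_image_le.trans_lt hU
  have hused : ∑ v ∈ U.image c, colorWeight k m U c v = r * m - #U := by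
    have hsum : ∑ v ∈ U.image c, classSize U c v = #U := by
      rw [← sum_classSize U c]
      exact sum_subset (subset_univ _) fun v _ hv ↦ classSize_eq_zero hv
    rw [← hsum, Nat.cast_sum, hr, ← nsmul_eq_mul, ← sum_const, ← sum_sub_distrib]
    exact sum_congr rfl fun v hv ↦ by rw [colorWeight, if_pos hv, mul_one]
  have hunused : ∑ v ∈ (U.image c)ᶜ, colorWeight k m U c v = m * (k - r) := by
    have hconst : ∀ v ∈ (U.image c)ᶜ,
        colorWeight k m U c v = m * ((k - r) / (Fintype.card V - r)) := fun v hv ↦ by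
      rw [colorWeight, if_neg (mem_compl.1 hv), classSize_eq_zero (mem_compl.1 hv), Nat.cast_zero,
        sub_zero]
    rw [sum_congr rfl hconst, sum_const, card_compl, nsmul_eq_mul,
      Nat.cast_sub (card_le_univ _), ← hr]
    field_simp [sub_ne_zero.2 hrn.ne']
  rw [← sum_add_sum_compl (U.image c), hused, hunused]
  linear_combination hkm

end Density

section PseudoExpectation

variable {F G : (V → V) → ℝ}

lemma expect_update (i : V) (G : (V → V) → ℝ) : 𝔼 c, 𝔼 v, G (update c i v) = 𝔼 c, G c := by
  have : Nonempty V := ⟨i⟩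
  let swapColor : (V → V) × V ≃ (V → V) × V :=
    Involutive.toPerm (fun p ↦ (update p.1 i p.2, p.1 i)) fun p ↦ by simp
  calc 𝔼 c, 𝔼 v, G (update c i v) = 𝔼 p : (V → V) × V, G (swapColor p).1 :=
        (expect_product' univ univ fun c v ↦ G (update c i v)).symm
    _ = 𝔼 p : (V → V) × V, G p.1 := Fintype.expect_equiv swapColor _ _ fun _ ↦ rfl
    _ = 𝔼 c, 𝔼 _v : V, G c := expect_product' univ univ fun c _ ↦ G c
    _ = 𝔼 c, G c := by simp only [Fintype.expect_const]

lemma marginal_insert (hi : i ∉ U) (F : (V → V) → ℝ) :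
    marginal k m (insert i U) F = marginal k m U (condExp k m U i F) := by
  have : Nonempty V := ⟨i⟩
  change 𝔼 c, density k m (insert i U) c * F c = 𝔼 c, density k m U c * condExp k m U i F c
  rw [← expect_update i fun c ↦ density k m (insert i U) c * F c]
  refine expect_congr rfl fun c _ ↦ ?_
  simp only [density_insert_update hi]
  rw [Fintype.expect_eq_sum_div_card, condExp, sum_div, sum_div, mul_sum]
  refine sum_congr rfl fun v _ ↦ ?_
  field_simp

lemma condExp_mul (hi : i ∉ U) {f : (V → V) → ℝ} (hf : DependsOn f (U : Set V)) :
    condExp k m U i (f * F) = f * condExp k m U i F := by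
  ext c
  have hfc : ∀ v, f (update c i v) = f c := fun v ↦
    hf fun j hj ↦ update_of_ne (ne_of_mem_of_not_mem hj hi) _ _
  simp only [condExp, Pi.mul_apply, hfc, mul_left_comm _ (f c), ← mul_sum, mul_div_assoc]

lemma condExp_one (hkm : k * m = Fintype.card V) (hi : i ∉ U) : condExp k m U i 1 = 1 := by
  have hU : #U < Fintype.card V := card_lt_univ_of_notMem hi
  ext c
  have hne : (Fintype.card V - #U : ℝ) ≠ 0 := sub_ne_zero.2 (Nat.cast_lt.2 hU).ne'
  simp only [condExp, Pi.one_apply, mul_one, sum_colorWeight hkm hU, div_self hne]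

lemma condExp_of_dependsOn (hkm : k * m = Fintype.card V) (hi : i ∉ U)
    (hF : DependsOn F (U : Set V)) : condExp k m U i F = F := by
  simpa [condExp_one hkm hi] using condExp_mul (k := k) (m := m) (F := 1) hi hF

lemma marginal_union (hkm : k * m = Fintype.card V) (T : Finset V) (hF : DependsOn F (U : Set V)) :
    marginal k m (T ∪ U) F = marginal k m U F := by
  induction T using Finset.induction_on with
  | empty => rw [empty_union]
  | insert i T _ ih =>
    rw [insert_union]
    by_cases hi : i ∈ T ∪ U
    · rw [insert_eq_of_mem hi, ih]
    · rw [marginal_insert hi,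
        condExp_of_dependsOn hkm hi (hF.mono (coe_subset.2 subset_union_right)), ih]

lemma pseudoExp_eq_marginal (hkm : k * m = Fintype.card V) (hF : DependsOn F (U : Set V)) :
    pseudoExp k m F = marginal k m U F := by
  rw [← marginal_union hkm univ hF, union_eq_left.2 (subset_univ U), pseudoExp]

lemma pseudoExp_one (hkm : k * m = Fintype.card V) : pseudoExp k m (1 : (V → V) → ℝ) = 1 := by
  rw [pseudoExp_eq_marginal (U := ∅) hkm fun _ _ _ ↦ rfl]
  have hconst := expect_const (univ_nonempty_iff.2 ⟨(id : V → V)⟩) (1 : ℝ)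
  simpa [marginal, density, classSize] using hconst

lemma density_nonneg {s : ℕ} (hk : (s : ℝ) ≤ k + 1) (hm : (s : ℝ) ≤ m + 1) (hU : #U ≤ s)
    (c : V → V) : 0 ≤ density k m U c := by
  have nonneg : ∀ {r : ℕ} {x : ℝ}, r ≤ #U → (#U : ℝ) ≤ x + 1 → 0 ≤ (descPochhammer ℝ r).eval x :=
    fun {r x} hr hx ↦ descPochhammer_nonneg (by linarith [(Nat.cast_le (α := ℝ)).2 hr])
  have hUs : (#U : ℝ) ≤ s := Nat.cast_le.2 hU
  have hUn : (#U : ℝ) ≤ Fintype.card V + 1 := by exact_mod_cast U.card_le_univ.trans (by simp)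
  exact mul_nonneg (mul_nonneg (div_nonneg (by positivity) (nonneg le_rfl hUn))
    (div_nonneg (nonneg card_image_le (hUs.trans hk)) (nonneg card_image_le hUn)))
    (prod_nonneg fun v _ ↦ nonneg (card_filter_le _ _) (hUs.trans hm))

lemma pseudoExp_nonneg (hkm : k * m = Fintype.card V) {s : ℕ} (hk : (s : ℝ) ≤ k + 1)
    (hm : (s : ℝ) ≤ m + 1) (hU : #U ≤ s) (hF : DependsOn F (U : Set V)) (hF0 : 0 ≤ F) :
    0 ≤ pseudoExp k m F := by
  rw [pseudoExp_eq_marginal hkm hF]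
  exact expect_nonneg fun c _ ↦ mul_nonneg (density_nonneg hk hm hU c) (hF0 c)

lemma dependsOn_condExp (hF : DependsOn F (insert i U : Finset V)) :
    DependsOn (condExp k m U i F) (U : Set V) := fun c c' h ↦ by
  have himage : U.image c = U.image c' := image_congr h
  have hF' : ∀ v, F (update c i v) = F (update c' i v) := fun v ↦
    (hF.update i v).mono (coe_subset.2 (erase_insert_subset i U)) h
  simp only [condExp, colorWeight, himage, dependsOn_classSize U h, hF']

lemma pseudoExp_condExp (hkm : k * m = Fintype.card V) (hi : i ∉ U)
    (hF : DependsOn F (insert i U : Finset V)) :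
    pseudoExp k m (condExp k m U i F) = pseudoExp k m F := by
  rw [pseudoExp_eq_marginal hkm (dependsOn_condExp hF), ← marginal_insert hi,
    pseudoExp_eq_marginal hkm hF]

end PseudoExpectation

section NullSpace

/-- The functions that the pseudo-expectation annihilates after multiplication by any function of
degree at most `s`. -/
def nullSpace (V : Type*) [Fintype V] [DecidableEq V] (k m : ℝ) (s : ℕ) :
    Submodule ℝ ((V → V) → ℝ) where
  carrier := {F | ∀ f ∈ lowDegree V s, pseudoExp k m (f * F) = 0}
  add_mem' hF hG f hf := by rw [mul_add, map_add, hF f hf, hG f hf, add_zero]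
  zero_mem' f _ := by rw [mul_zero, map_zero]
  smul_mem' a F hF f hf := by rw [mul_smul_comm, map_smul, hF f hf, smul_zero]

variable {A : Finset V} {j : V} {s : ℕ} {F : (V → V) → ℝ}

lemma mem_nullSpace_of_forall_pattern
    (hF : ∀ U : Finset V, #U ≤ s → ∀ f ∈ patternAlgebra U, pseudoExp k m (f * F) = 0) :
    F ∈ nullSpace V k m s := fun f hf ↦ by
  induction hf using Submodule.span_induction with
  | mem f hf => exact let ⟨U, hU, hfU⟩ := hf; hF U hU f hfU
  | zero => rw [zero_mul, map_zero]
  | add f g _ _ hf hg => rw [add_mul, map_add, hf, hg, add_zero]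
  | smul a f _ hf => rw [smul_mul_assoc, map_smul, hf, smul_zero]

lemma colorWeight_perm (π : Equiv.Perm V) (c : V → V) (v : V) :
    colorWeight k m U (π ∘ c) (π v) = colorWeight k m U c v := by
  simp only [colorWeight, classSize, ← image_image, card_image_of_injective _ π.injective,
    π.injective.mem_finset_image, comp_apply, EmbeddingLike.apply_eq_iff_eq]

lemma condExp_mem_patternAlgebra (hF : F ∈ patternAlgebra (insert j A)) :
    condExp k m A j F ∈ patternAlgebra A := by
  refine ⟨dependsOn_condExp hF.1, fun π c ↦ ?_⟩
  rw [condExp, condExp, ← Equiv.sum_comp π]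
  simp only [colorWeight_perm, ← comp_update, hF.2]

lemma sum_substVertex_apply (B : Finset V) (F : (V → V) → ℝ) (j : V) (c : V → V) :
    (∑ i ∈ B, substVertex F j i) c = ∑ v, classSize B c v * F (update c j v) := by
  rw [Finset.sum_apply, ← sum_fiberwise_of_maps_to (g := c) fun i _ ↦ mem_univ (c i)]
  refine sum_congr rfl fun v _ ↦ ?_
  rw [classSize, ← nsmul_eq_mul]
  exact sum_eq_card_nsmul fun i hi ↦ by rw [substVertex, (mem_filter.1 hi).2]

lemma smul_condExp_apply (hU : #U < Fintype.card V) (F : (V → V) → ℝ) (c : V → V) :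
    ((Fintype.card V - #U : ℝ) • condExp k m U j F) c =
      ∑ v, colorWeight k m U c v * F (update c j v) :=
  mul_div_cancel₀ _ (sub_ne_zero.2 (Nat.cast_lt.2 hU).ne')

lemma classSize_sdiff_add_colorWeight {A U : Finset V} (hAU : A ⊆ U) {c : V → V} {v : V}
    (hv : v ∈ A.image c) :
    classSize (U \ A) c v + colorWeight k m U c v = colorWeight k m A c v := by
  simp only [colorWeight, if_pos hv, if_pos (image_subset_image hAU hv),
    ← classSize_sdiff_add hAU, Nat.cast_add]
  ring

lemma sum_classSize_sdiff_add_colorWeight (hkm : k * m = Fintype.card V) {A U : Finset V}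
    (hAU : A ⊆ U) (hU : #U < Fintype.card V) (c : V → V) :
    ∑ v, (classSize (U \ A) c v + colorWeight k m U c v) = ∑ v, colorWeight k m A c v := by
  rw [sum_add_distrib, sum_colorWeight hkm hU,
    sum_colorWeight hkm ((card_le_card hAU).trans_lt hU), ← Nat.cast_sum, sum_classSize,
    card_sdiff_of_subset hAU, Nat.cast_sub (card_le_card hAU)]
  ring

lemma sum_substVertex_add_condExp (hkm : k * m = Fintype.card V) {A U : Finset V} (hAU : A ⊆ U)
    (hU : #U < Fintype.card V) (hF : F ∈ patternAlgebra (insert j A)) :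
    ∑ i ∈ U \ A, substVertex F j i + (Fintype.card V - #U : ℝ) • condExp k m U j F =
      (Fintype.card V - #A : ℝ) • condExp k m A j F := by
  have hA : #A < Fintype.card V := (card_le_card hAU).trans_lt hU
  ext c
  obtain ⟨w, hw⟩ : ∃ w, w ∉ A.image c := by
    by_contra! h
    exact (card_image_le.trans_lt hA).ne (congrArg card (eq_univ_of_forall h))
  -- The weights of the two sides agree on the colors used in `A`, and `F` is constant on the rest.
  have hterm : ∀ v, (classSize (U \ A) c v + colorWeight k m U c v - colorWeight k m A c v) *
      (F (update c j v) - F (update c j w)) = 0 := fun v ↦ by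
    by_cases hv : v ∈ A.image c
    · rw [classSize_sdiff_add_colorWeight hAU hv, sub_self, zero_mul]
    · rw [apply_update_eq_of_mem_patternAlgebra hF hv hw, sub_self, mul_zero]
  have hsum := sum_eq_zero fun v (_ : v ∈ univ) ↦ hterm v
  simp only [mul_sub, sum_sub_distrib, ← sum_mul, sum_classSize_sdiff_add_colorWeight hkm hAU hU,
    sub_self, zero_mul, sub_zero] at hsum
  rw [Pi.add_apply, smul_condExp_apply hU, smul_condExp_apply hA, sum_substVertex_apply,
    ← sub_eq_zero, ← hsum, ← sum_add_distrib, ← sum_sub_distrib]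
  exact sum_congr rfl fun v _ ↦ by ring

lemma condExp_substVertex (hi : i ∉ A) (hF : DependsOn F (insert j A : Finset V)) (U : Finset V) :
    condExp k m U i (substVertex F j i) = condExp k m U j F := by
  ext c
  have hupdate : ∀ v, substVertex F j i (update c i v) = F (update c j v) := fun v ↦ by
    rw [substVertex, update_self]
    refine hF fun a ha ↦ ?_
    rcases eq_or_ne a j with rfl | haj
    · rw [update_self, update_self]
    · rw [update_of_ne haj, update_of_ne haj, update_of_ne]
      exact ne_of_mem_of_not_mem (mem_of_mem_insert_of_ne ha haj) hi
  simp only [condExp, hupdate]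

theorem sum_substVertex_sub_condExp_mem_nullSpace (hkm : k * m = Fintype.card V)
    (hs : #A + s < Fintype.card V) (hF : F ∈ patternAlgebra (insert j A)) :
    ∑ i ∈ Aᶜ, substVertex F j i - (Fintype.card V - #A : ℝ) • condExp k m A j F ∈
      nullSpace V k m s := by
  refine mem_nullSpace_of_forall_pattern fun K hK f hf ↦ ?_
  set U := A ∪ K
  have hAU : A ⊆ U := subset_union_left
  have hU : #U < Fintype.card V := (card_union_le A K).trans_lt (by lia)
  have hout : ∀ i ∈ Uᶜ, pseudoExp k m (f * substVertex F j i) =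
      pseudoExp k m (f * condExp k m U j F) := fun i hi ↦ by
    have hiU : i ∉ U := mem_compl.1 hi
    have hfU : DependsOn f (U : Set V) := hf.1.mono (coe_subset.2 subset_union_right)
    have hFU : DependsOn (f * substVertex F j i) (insert i U : Finset V) :=
      (patternAlgebra _).mul_mem (patternAlgebra_mono (subset_union_right.trans
        (subset_insert i U)) hf) (patternAlgebra_mono (insert_subset_insert i hAU)
        (substVertex_mem_patternAlgebra hF i)) |>.1
    rw [← pseudoExp_condExp hkm hiU hFU, condExp_mul hiU hfU,
      condExp_substVertex (fun h ↦ hiU (hAU h)) hF.1]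
  have hcompl : Aᶜ \ (U \ A) = Uᶜ := by
    rw [compl_eq_univ_sdiff, compl_eq_univ_sdiff, sdiff_sdiff_left, sup_eq_union,
      union_sdiff_of_subset hAU]
  have hsub : U \ A ⊆ Aᶜ := fun i hi ↦ mem_compl.2 (mem_sdiff.1 hi).2
  have hsplit : ∑ i ∈ Aᶜ, substVertex F j i - (Fintype.card V - #A : ℝ) • condExp k m A j F =
      ∑ i ∈ Uᶜ, substVertex F j i - (Fintype.card V - #U : ℝ) • condExp k m U j F := by
    rw [← sum_substVertex_add_condExp hkm hAU hU hF, ← sum_sdiff hsub, hcompl]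
    abel
  rw [hsplit, mul_sub, mul_sum, map_sub, map_sum, sum_congr rfl hout, sum_const, card_compl,
    mul_smul_comm, map_smul, nsmul_eq_mul, Nat.cast_sub hU.le, smul_eq_mul, sub_self]

/-- How much the color class of `a` exceeds the size `m` it should have. -/
def classDeviation (m : ℝ) (a : V) (c : V → V) : ℝ := classSize univ c (c a) - m

theorem mul_classDeviation_mem_nullSpace (hkm : k * m = Fintype.card V)
    (hs : #A + s < Fintype.card V) {a : V} (ha : a ∈ A) {g : (V → V) → ℝ}
    (hg : g ∈ patternAlgebra A) : g * classDeviation m a ∈ nullSpace V k m s := by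
  obtain ⟨j, hj⟩ : ∃ j, j ∉ A := by
    by_contra! h
    exact (Nat.le_add_right _ s).not_gt (hs.trans_eq (congrArg card (eq_univ_of_forall h)).symm)
  have hA : #A < Fintype.card V := card_lt_univ_of_notMem hj
  have hja : a ≠ j := ne_of_mem_of_not_mem ha hj
  set sameColor : (V → V) → ℝ := fun c ↦ if c j = c a then 1 else 0 with hsame
  have hF : g * sameColor ∈ patternAlgebra (insert j A) :=
    (patternAlgebra _).mul_mem (patternAlgebra_mono (subset_insert j A) hg)
      (indicator_mem_patternAlgebra (mem_insert_self j A) (mem_insert_of_mem ha))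
  have hupdate : ∀ c v, (g * sameColor) (update c j v) = g c * if v = c a then 1 else 0 :=
    fun c v ↦ by
      have hgc : g (update c j v) = g c :=
        hg.1 fun b hb ↦ update_of_ne (ne_of_mem_of_not_mem hb hj) _ _
      rw [Pi.mul_apply, hgc, hsame]
      simp only [update_self, update_of_ne hja]
  convert sum_substVertex_sub_condExp_mem_nullSpace hkm hs hF using 1
  ext c
  rw [Pi.sub_apply, sum_substVertex_apply, smul_condExp_apply hA]
  simp only [hupdate, mul_ite, mul_one, mul_zero, sum_ite_eq', mem_univ, if_true, Pi.mul_apply,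
    classDeviation, colorWeight, mem_image_of_mem c ha, ← classSize_sdiff_add (subset_univ A),
    Nat.cast_add, compl_eq_univ_sdiff]
  ring

end NullSpace

section Average

variable {A I J : Finset V} {j : V} {F : (V → V) → ℝ} {s : ℕ} {σ τ : Equiv.Perm V}

/-- The permutations of the vertices that fix every element of `I`. -/
def fixators (I : Finset V) : Finset (Equiv.Perm V) := {σ | ∀ i ∈ I, σ i = i}

/-- The unnormalized average over all relabelings of the vertices that fix `I` pointwise. -/
def average (I : Finset V) : ((V → V) → ℝ) →ₗ[ℝ] ((V → V) → ℝ) := ∑ σ ∈ fixators I, relabel σ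

lemma mem_fixators : σ ∈ fixators I ↔ ∀ i ∈ I, σ i = i := by simp [fixators]

lemma inv_mem_fixators (hσ : σ ∈ fixators I) : σ⁻¹ ∈ fixators I :=
  mem_fixators.2 fun i hi ↦ Equiv.Perm.inv_eq_iff_eq.2 (mem_fixators.1 hσ i hi).symm

lemma mul_mem_fixators (hσ : σ ∈ fixators I) (hτ : τ ∈ fixators I) : σ * τ ∈ fixators I :=
  mem_fixators.2 fun i hi ↦ by
    rw [Equiv.Perm.mul_apply, mem_fixators.1 hτ i hi, mem_fixators.1 hσ i hi]

lemma average_apply (I : Finset V) (F : (V → V) → ℝ) :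
    average I F = ∑ σ ∈ fixators I, relabel σ F := LinearMap.sum_apply _ _ _

lemma average_relabel (hσ : σ ∈ fixators I) (F : (V → V) → ℝ) :
    average I (relabel σ F) = average I F := by
  simp only [average_apply, ← relabel_mul_apply]
  exact sum_bij' (fun τ _ ↦ τ * σ) (fun τ _ ↦ τ * σ⁻¹) (fun _ hτ ↦ mul_mem_fixators hτ hσ)
    (fun _ hτ ↦ mul_mem_fixators hτ (inv_mem_fixators hσ)) (by simp) (by simp) (fun _ _ ↦ rfl)

lemma average_of_mem_patternAlgebra (hF : F ∈ patternAlgebra I) :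
    average I F = #(fixators I) • F := by
  rw [average_apply]
  refine sum_eq_card_nsmul fun σ hσ ↦ funext fun c ↦ hF.1 fun i hi ↦ ?_
  exact congrArg c (mem_fixators.1 hσ i hi)

lemma map_mul_average {L : ((V → V) → ℝ) →ₗ[ℝ] ℝ} (hL : ∀ σ F, L (relabel σ F) = L F)
    (I : Finset V) (f F : (V → V) → ℝ) : L (f * average I F) = L (average I f * F) := by
  simp only [average_apply, mul_sum, sum_mul, map_sum]
  refine sum_bij' (fun σ _ ↦ σ⁻¹) (fun σ _ ↦ σ⁻¹) (fun _ ↦ inv_mem_fixators)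
    (fun _ ↦ inv_mem_fixators) (by simp) (by simp) fun σ _ ↦ ?_
  rw [← hL σ⁻¹, relabel_mul, ← relabel_mul_apply, inv_mul_cancel]
  rfl

lemma pseudoExp_relabel (σ : Equiv.Perm V) (F : (V → V) → ℝ) :
    pseudoExp k m (relabel σ F) = pseudoExp k m F := by
  have hdensity : ∀ c : V → V, density k m univ (c ∘ σ) = density k m univ c := fun c ↦ by
    have himage : univ.image (c ∘ σ) = univ.image c := by
      rw [← image_image, image_univ_equiv]
    have hclass : classSize univ (c ∘ σ) = classSize univ c := funext fun v ↦
      card_equiv σ (by simp)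
    rw [density, himage, hclass, density]
  refine Fintype.expect_equiv (σ.symm.arrowCongr (Equiv.refl V)) _ _ fun c ↦ ?_
  exact congrArg (· * F (c ∘ σ)) (hdensity c).symm

lemma average_mem_lowDegree (I : Finset V) (hF : F ∈ lowDegree V s) :
    average I F ∈ lowDegree V s := by
  rw [average_apply]
  refine sum_mem fun σ _ ↦ ?_
  suffices lowDegree V s ≤ (lowDegree V s).comap (relabel σ) from this hF
  exact Submodule.span_le.2 fun _ ⟨_, hU, hF⟩ ↦
    mem_lowDegree (card_image_le.trans hU) (relabel_mem_patternAlgebra hF σ)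

lemma average_mem_nullSpace (I : Finset V) (hF : F ∈ nullSpace V k m s) :
    average I F ∈ nullSpace V k m s := fun f hf ↦ by
  rw [map_mul_average pseudoExp_relabel]
  exact hF _ (average_mem_lowDegree I hf)

lemma average_substVertex (hF : DependsOn F (insert j A : Finset V)) (hi : i ∉ I ∪ A)
    (hj : j ∉ I ∪ A) : average I (substVertex F j i) = average I F := by
  rw [notMem_union] at hi hj
  rw [substVertex_eq_relabel_swap hF hi.2 hj.2, average_relabel (mem_fixators.2 fun a ha ↦ ?_)]
  exact Equiv.swap_apply_of_ne_of_ne (ne_of_mem_of_not_mem ha hi.1) (ne_of_mem_of_not_mem ha hj.1)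

lemma sum_average_substVertex_add_average_mem_nullSpace (hkm : k * m = Fintype.card V)
    (hs : #A + s < Fintype.card V) (hj : j ∉ I ∪ A) (hF : F ∈ patternAlgebra (insert j A)) :
    ∑ i ∈ I \ A, average I (substVertex F j i) + #(I ∪ A)ᶜ • average I F -
      (Fintype.card V - #A : ℝ) • average I (condExp k m A j F) ∈ nullSpace V k m s := by
  have hsub : I \ A ⊆ Aᶜ := fun i hi ↦ mem_compl.2 (mem_sdiff.1 hi).2
  have hcompl : Aᶜ \ (I \ A) = (I ∪ A)ᶜ := by
    rw [compl_eq_univ_sdiff, compl_eq_univ_sdiff, sdiff_sdiff_left, sup_eq_union,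
      union_sdiff_self_eq_union, union_comm]
  have hrest : ∀ i ∈ (I ∪ A)ᶜ, average I (substVertex F j i) = average I F := fun i hi ↦
    average_substVertex hF.1 (mem_compl.1 hi) hj
  have hnull := average_mem_nullSpace I (sum_substVertex_sub_condExp_mem_nullSpace hkm hs hF)
  rwa [map_sub, map_smul, map_sum, ← sum_sdiff hsub, hcompl, sum_congr rfl hrest, sum_const,
    add_comm] at hnull

theorem average_mem_sup_of_mem_patternAlgebra (hkm : k * m = Fintype.card V)
    (hs : 2 * s ≤ Fintype.card V) (hI : #I ≤ s) (hJ : #J ≤ s) (hF : F ∈ patternAlgebra J) :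
    average I F ∈ (patternAlgebra I).toSubmodule ⊔ nullSpace V k m s := by
  induction hd : #(J \ I) using Nat.strong_induction_on generalizing J F with | _ d ih => ?_
  subst hd
  rcases (J \ I).eq_empty_or_nonempty with hempty | ⟨j, hj⟩
  · have hFI : F ∈ patternAlgebra I := patternAlgebra_mono (sdiff_eq_empty_iff_subset.1 hempty) hF
    rw [average_of_mem_patternAlgebra hFI]
    exact Submodule.mem_sup_left (nsmul_mem (S := (patternAlgebra I).toSubmodule) hFI _)
  obtain ⟨hjJ, hjI⟩ := mem_sdiff.1 hj
  obtain ⟨A, hjA, rfl⟩ : ∃ A, j ∉ A ∧ insert j A = J :=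
    ⟨J.erase j, notMem_erase j J, insert_erase hjJ⟩
  rw [card_insert_of_notMem hjA] at hJ
  have hfewer : #(A \ I) < #(insert j A \ I) := by
    rw [insert_sdiff_of_notMem _ hjI, card_insert_of_notMem fun h ↦ hjA (mem_sdiff.1 h).1]
    exact Nat.lt_succ_self _
  have hsubst : ∀ i ∈ I \ A, average I (substVertex F j i) ∈
      (patternAlgebra I).toSubmodule ⊔ nullSpace V k m s := fun i hi ↦ by
    refine ih _ ?_ ((card_insert_le i A).trans hJ) (substVertex_mem_patternAlgebra hF i) rfl
    rwa [insert_sdiff_of_mem _ (mem_sdiff.1 hi).1]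
  have hcond : average I (condExp k m A j F) ∈
      (patternAlgebra I).toSubmodule ⊔ nullSpace V k m s :=
    ih _ hfewer (by lia) (condExp_mem_patternAlgebra hF) rfl
  have hnull := sum_average_substVertex_add_average_mem_nullSpace hkm (s := s) (by lia)
    (notMem_union.2 ⟨hjI, hjA⟩) hF
  have hmultiple := (Submodule.add_mem_iff_right _ (sum_mem hsubst)).1 <|
    (Submodule.sub_mem_iff_left _ (Submodule.smul_mem _ _ hcond)).1 (Submodule.mem_sup_right hnull)
  rw [← Nat.cast_smul_eq_nsmul ℝ] at hmultiple
  refine (Submodule.smul_mem_iff _ (Nat.cast_ne_zero.2 ?_)).1 hmultiple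
  rw [card_compl]
  have := card_union_le I A
  lia

lemma average_mem_sup (hkm : k * m = Fintype.card V) (hs : 2 * s ≤ Fintype.card V) (hI : #I ≤ s)
    (hF : F ∈ lowDegree V s) :
    average I F ∈ (patternAlgebra I).toSubmodule ⊔ nullSpace V k m s := by
  suffices lowDegree V s ≤ Submodule.comap (average I) (_ ⊔ nullSpace V k m s) from this hF
  exact Submodule.span_le.2 fun _ ⟨_, hJ, hF⟩ ↦
    average_mem_sup_of_mem_patternAlgebra hkm hs hI hJ hF

end Average

section NegativeEigenvector

lemma exists_neg_eigenvalue {E : Type*} [NormedAddCommGroup E] [InnerProductSpace ℝ E]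
    [FiniteDimensional ℝ E] {T : E →ₗ[ℝ] E} (hT : T.IsSymmetric) {x : E}
    (hx : inner ℝ (T x) x < 0) : ∃ μ < 0, Module.End.HasEigenvalue T μ := by
  set b := hT.eigenvectorBasis rfl with hb
  have hsum : inner ℝ (T x) x = ∑ i, hT.eigenvalues rfl i * inner ℝ x (b i) ^ 2 := by
    rw [← b.sum_inner_mul_inner]
    refine sum_congr rfl fun i _ ↦ ?_
    rw [hT, hb, hT.apply_eigenvectorBasis, ← hb, inner_smul_right, real_inner_comm x]
    simp only [RCLike.ofReal_real_eq_id, id]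
    ring
  obtain ⟨i, -, hi⟩ := exists_lt_of_sum_lt (hsum ▸ hx.trans_eq sum_const_zero.symm)
  exact ⟨_, neg_of_mul_neg_left hi (sq_nonneg _), hT.hasEigenvalue_eigenvalues rfl i⟩

lemma exists_neg_eigenvector_of_bilinForm {E : Type*} [NormedAddCommGroup E]
    [InnerProductSpace ℝ E] [FiniteDimensional ℝ E] {B : LinearMap.BilinForm ℝ E} (hB : B.IsSymm)
    {x : E} (hx : B x x < 0) : ∃ μ < 0, ∃ v ≠ 0, ∀ y, B v y = μ * inner ℝ v y := by
  have hnd : LinearMap.BilinForm.Nondegenerate (innerₗ E) :=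
    (LinearMap.BilinForm.nondegenerate_iff _ (fun _ ↦ real_inner_self_nonneg) isSymm_inner).2
      fun _ ↦ inner_self_eq_zero
  set T := B.symmCompOfNondegenerate (innerₗ E) hnd
  have hinner : ∀ y z, inner ℝ (T y) z = B y z := fun y z ↦
    B.symmCompOfNondegenerate_left_apply hnd z y
  have hsymm : T.IsSymmetric := fun y z ↦ by
    rw [hinner, real_inner_comm, hinner]
    exact hB.eq y z
  obtain ⟨μ, hμ, hTμ⟩ := exists_neg_eigenvalue hsymm ((hinner x x).trans_lt hx)
  obtain ⟨v, hv⟩ := hTμ.exists_hasEigenvector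
  exact ⟨μ, hμ, v, hv.2, fun y ↦ by rw [← hinner, hv.apply_eq_smul, real_inner_smul_left]⟩

lemma exists_neg_eigenvector {ι : Type*} [Fintype ι] (L : (ι → ℝ) →ₗ[ℝ] ℝ)
    {S : Submodule ℝ (ι → ℝ)} {F : ι → ℝ} (hF : F ∈ S) (hLF : L (F * F) < 0) :
    ∃ μ < 0, ∃ G ∈ S, G ≠ 0 ∧ ∀ y ∈ S, L (G * y) = μ * (G ⬝ᵥ y) := by
  let e := WithLp.linearEquiv 2 ℝ (ι → ℝ)
  let coord : S.comap e.toLinearMap →ₗ[ℝ] ι → ℝ := e.toLinearMap ∘ₗ Submodule.subtype _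
  let B : LinearMap.BilinForm ℝ (S.comap e.toLinearMap) :=
    (LinearMap.mul ℝ (ι → ℝ)).compr₂ L |>.compl₁₂ coord coord
  have hB : B.IsSymm := ⟨fun y z ↦ congrArg L (mul_comm _ _)⟩
  obtain ⟨μ, hμ, G, hG, hBG⟩ :=
    exists_neg_eigenvector_of_bilinForm hB (x := ⟨e.symm F, hF⟩) hLF
  refine ⟨μ, hμ, e G, G.2, by simpa using hG, fun y hy ↦ (hBG ⟨e.symm y, hy⟩).trans ?_⟩
  rw [dotProduct_comm]
  rfl

end NegativeEigenvector

section Positivity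

variable {I : Finset V} {s : ℕ} {F G : (V → V) → ℝ}

lemma dotProduct_average (I : Finset V) (F G : (V → V) → ℝ) :
    F ⬝ᵥ average I G = average I F ⬝ᵥ G := by
  have hrelabel : ∀ (σ : Equiv.Perm V) (F : (V → V) → ℝ), 1 ⬝ᵥ relabel σ F = 1 ⬝ᵥ F := fun σ F ↦
    Fintype.sum_equiv (σ.symm.arrowCongr (Equiv.refl V)) _ _ fun _ ↦ rfl
  simpa [dotProduct] using
    map_mul_average (L := dotProductBilin ℝ ℝ (1 : (V → V) → ℝ)) hrelabel I F G

lemma exists_pattern_dotProduct_ne_zero (hG : G ∈ lowDegree V s) (hG0 : G ≠ 0) :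
    ∃ I : Finset V, #I ≤ s ∧ ∃ f ∈ patternAlgebra I, f ⬝ᵥ G ≠ 0 := by
  by_contra! h
  suffices lowDegree V s ≤ LinearMap.ker ((dotProductBilin ℝ ℝ).flip G) from
    hG0 (dotProduct_self_eq_zero.1 (this hG))
  exact Submodule.span_le.2 fun f ⟨I, hI, hf⟩ ↦ h I hI f hf

lemma card_fixators_ne_zero (I : Finset V) : #(fixators I) ≠ 0 :=
  card_ne_zero_of_mem (mem_fixators.2 fun _ _ ↦ rfl : (1 : Equiv.Perm V) ∈ fixators I)

lemma average_ne_zero {f : (V → V) → ℝ} (hf : f ∈ patternAlgebra I) (hfG : f ⬝ᵥ G ≠ 0) :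
    average I G ≠ 0 := fun h ↦ by
  have := dotProduct_average I f G
  rw [h, dotProduct_zero, average_of_mem_patternAlgebra hf, smul_dotProduct] at this
  exact smul_ne_zero (card_fixators_ne_zero I) hfG this.symm

theorem pseudoExp_average_mul_self_nonneg (hkm : k * m = Fintype.card V)
    (hn : 2 * s ≤ Fintype.card V) (hk : (s : ℝ) ≤ k + 1) (hm : (s : ℝ) ≤ m + 1) (hI : #I ≤ s)
    (hF : F ∈ lowDegree V s) : 0 ≤ pseudoExp k m (average I F * average I F) := by
  obtain ⟨h, hh, z, hz, hsum⟩ := Submodule.mem_sup.1 (average_mem_sup hkm hn hI hF)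
  have hhlow : h ∈ lowDegree V s := mem_lowDegree hI hh
  have hcross : pseudoExp k m (average I F * z) = 0 := hz _ (average_mem_lowDegree I hF)
  have hreduce : pseudoExp k m (average I F * average I F) = pseudoExp k m (h * h) := by
    nth_rw 2 [← hsum]
    rw [mul_add, map_add, hcross, add_zero, ← hsum, add_mul, map_add, mul_comm z, hz h hhlow,
      add_zero]
  rw [hreduce]
  exact pseudoExp_nonneg hkm hk hm hI ((patternAlgebra I).mul_mem hh hh).1 fun c ↦ mul_self_nonneg _

theorem pseudoExp_mul_self_nonneg (hkm : k * m = Fintype.card V) (hn : 2 * s ≤ Fintype.card V)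
    (hk : (s : ℝ) ≤ k + 1) (hm : (s : ℝ) ≤ m + 1) (hF : F ∈ lowDegree V s) :
    0 ≤ pseudoExp k m (F * F) := by
  by_contra! hneg
  obtain ⟨μ, hμ, G, hG, hG0, hGμ⟩ := exists_neg_eigenvector (pseudoExp k m) hF hneg
  obtain ⟨I, hI, f, hf, hfG⟩ := exists_pattern_dotProduct_ne_zero hG hG0
  have hGav : average I G ≠ 0 := average_ne_zero hf hfG
  have heq : pseudoExp k m (average I G * average I G) = μ * (average I G ⬝ᵥ average I G) := by
    rw [← map_mul_average pseudoExp_relabel, ← dotProduct_average]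
    exact hGμ _ (average_mem_lowDegree I (average_mem_lowDegree I hG))
  have hnonneg := pseudoExp_average_mul_self_nonneg hkm hn hk hm hI hG
  rw [heq] at hnonneg
  have hle := nonpos_of_mul_nonneg_right hnonneg hμ
  exact hGav (dotProduct_self_eq_zero.1 (hle.antisymm (sum_nonneg fun c _ ↦ mul_self_nonneg _)))

end Positivity

section RainbowCount

variable {s : ℕ}

lemma sum_classSize_comp (S : Finset V) (c : V → V) :
    ∑ a, classSize S c (c a) = ∑ x ∈ S, classSize univ c (c x) := by
  simp only [classSize]
  refine (sum_card_bipartiteAbove_eq_sum_card_bipartiteBelow (s := univ) (t := S)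
    fun a x ↦ c x = c a).trans (sum_congr rfl fun x _ ↦ congrArg card ?_)
  exact filter_congr fun a _ ↦ eq_comm

lemma sum_rainbow_insert (m : ℝ) (S : Finset V) :
    ∑ a ∈ Sᶜ, rainbow (insert a S) =
      (Fintype.card V - #S * m) • rainbow S - ∑ x ∈ S, rainbow S * classDeviation m x := by
  ext c
  have hfilter : Sᶜ = ({a | ¬ a ∈ S} : Finset V) := by simp [compl_eq_univ_sdiff, sdiff_eq_filter]
  calc (∑ a ∈ Sᶜ, rainbow (insert a S)) c
      = ∑ a, rainbow S c * (1 - classSize S c (c a)) := by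
        simp only [rainbow_mul_one_sub_classSize, Finset.sum_apply, hfilter, sum_filter, ite_not]
    _ = rainbow S c * (Fintype.card V - ∑ x ∈ S, (classSize univ c (c x) : ℝ)) := by
        rw [← mul_sum, sum_sub_distrib, ← Nat.cast_sum, sum_classSize_comp]
        simp
    _ = _ := by
        simp only [Pi.sub_apply, Pi.smul_apply, smul_eq_mul, Finset.sum_apply, Pi.mul_apply,
          classDeviation, ← mul_sum, sum_sub_distrib, sum_const, nsmul_eq_mul]
        ring

/-- The number of `r`-element sets on which the coloring is injective. -/
def rainbowCount (V : Type*) [Fintype V] [DecidableEq V] (r : ℕ) : (V → V) → ℝ :=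
  ∑ S ∈ powersetCard r univ, rainbow S

lemma succ_smul_rainbowCount_succ (V : Type*) [Fintype V] [DecidableEq V] (r : ℕ) :
    (r + 1) • rainbowCount V (r + 1) =
      ∑ S ∈ powersetCard r (univ : Finset V), ∑ a ∈ Sᶜ, rainbow (insert a S) := by
  have hcard : ∀ S ∈ powersetCard (r + 1) (univ : Finset V),
      (r + 1) • rainbow S = ∑ _a ∈ S, rainbow S := fun S hS ↦ by
    rw [sum_const, mem_powersetCard_univ.1 hS]
  rw [rainbowCount, smul_sum, sum_congr rfl hcard, sum_sigma', sum_sigma']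
  refine sum_bij' (fun p _ ↦ ⟨p.1.erase p.2, p.2⟩) (fun p _ ↦ ⟨insert p.2 p.1, p.2⟩) ?_ ?_ ?_ ?_ ?_
  all_goals
    rintro ⟨S, a⟩ h
    simp only [mem_sigma, mem_powersetCard_univ, mem_compl] at h ⊢
    obtain ⟨hS, ha⟩ := h
  · simp [card_erase_of_mem ha, hS]
  · simp [card_insert_of_notMem ha, hS]
  · rw [insert_erase ha]
  · rw [erase_insert ha]
  · rw [insert_erase ha]

lemma smul_rainbowCount_succ_sub_mem_nullSpace (hkm : k * m = Fintype.card V) {r : ℕ}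
    (hr : r + s < Fintype.card V) :
    (r + 1) • rainbowCount V (r + 1) - (Fintype.card V - r * m) • rainbowCount V r ∈
      nullSpace V k m s := by
  have hrec : (r + 1) • rainbowCount V (r + 1) - (Fintype.card V - r * m) • rainbowCount V r =
      -∑ S ∈ powersetCard r univ, ∑ x ∈ S, rainbow S * classDeviation m x := by
    rw [succ_smul_rainbowCount_succ, rainbowCount, smul_sum, ← sum_sub_distrib,
      ← sum_neg_distrib]
    refine sum_congr rfl fun S hS ↦ ?_
    rw [sum_rainbow_insert m, mem_powersetCard_univ.1 hS]
    abel
  rw [hrec]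
  refine neg_mem (sum_mem fun S hS ↦ sum_mem fun x hx ↦ ?_)
  exact mul_classDeviation_mem_nullSpace hkm (by rwa [mem_powersetCard_univ.1 hS]) hx
    (rainbow_mem_patternAlgebra S)

theorem factorial_smul_rainbowCount_sub_mem_nullSpace (hkm : k * m = Fintype.card V) {r : ℕ}
    (hr : r + s ≤ Fintype.card V) :
    r.factorial • rainbowCount V r - (∏ j ∈ range r, (Fintype.card V - j * m)) • 1 ∈
      nullSpace V k m s := by
  induction r with
  | zero =>
    convert (nullSpace V k m s).zero_mem
    ext c
    simp [rainbowCount, rainbow]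
  | succ r ih =>
    have hstep := smul_rainbowCount_succ_sub_mem_nullSpace hkm (r := r) (s := s) (by lia)
    convert add_mem (nsmul_mem hstep r.factorial)
      (Submodule.smul_mem _ (Fintype.card V - r * m) (ih (by lia))) using 1
    rw [Nat.factorial_succ, prod_range_succ]
    module

end RainbowCount

section Evaluation

variable {n : ℕ}

/-- Evaluation of a polynomial at the complete multipartite graph whose parts are the color classes
of a coloring. -/
noncomputable def evalColoring :
    MvPolynomial (KEdge n) ℝ →ₐ[ℝ] ((Fin n → Fin n) → ℝ) :=
  aeval fun e ↦ rainbow (e : Finset (Fin n))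

lemma evalColoring_X (e : KEdge n) : evalColoring (X e) = rainbow (e : Finset (Fin n)) :=
  aeval_X _ e

lemma evalColoring_monomial_mem_patternAlgebra (d : KEdge n →₀ ℕ) (a : ℝ) :
    evalColoring (monomial d a) ∈
      patternAlgebra (d.support.biUnion fun e ↦ (e : Finset (Fin n))) := by
  rw [evalColoring, aeval_monomial]
  refine mul_mem (Subalgebra.algebraMap_mem _ a) (prod_mem fun e he ↦ pow_mem ?_ _)
  exact patternAlgebra_mono (subset_biUnion_of_mem (fun e : KEdge n ↦ (e : Finset (Fin n))) he)
    (rainbow_mem_patternAlgebra _)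

lemma evalColoring_mem_lowDegree {s : ℕ} {p : MvPolynomial (KEdge n) ℝ} (hp : indexDeg p ≤ s) :
    evalColoring p ∈ lowDegree (Fin n) s := by
  rw [p.as_sum, map_sum]
  exact sum_mem fun d hd ↦ mem_lowDegree ((le_sup hd).trans hp)
    (evalColoring_monomial_mem_patternAlgebra d _)

lemma evalColoring_X_sq_sub_X (e : KEdge n) : evalColoring (X e ^ 2 - X e) = 0 := by
  rw [map_sub, map_pow, evalColoring_X, sq, rainbow_mul_self, sub_self]

lemma evalColoring_prod_edges (S : Finset (Fin n)) :
    evalColoring (∏ e ∈ univ.filter (fun e : KEdge n => (e : Finset (Fin n)) ⊆ S), X e) =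
      rainbow S := by
  ext c
  simp only [map_prod, evalColoring_X, Finset.prod_apply]
  by_cases h : Set.InjOn c S
  · rw [rainbow_of_injOn h]
    exact prod_eq_one fun e he ↦
      rainbow_of_injOn (h.mono (coe_subset.2 (mem_filter.1 he).2))
  · rw [rainbow_of_not_injOn h]
    obtain ⟨x, hx, y, hy, hc, hxy⟩ := by simpa only [Set.InjOn, not_forall] using h
    refine prod_eq_zero (i := ⟨{x, y}, card_pair hxy⟩)
      (mem_filter.2 ⟨mem_univ _, insert_subset hx (singleton_subset_iff.2 hy)⟩) ?_
    exact rainbow_of_not_injOn fun h' ↦ hxy (h' (by simp) (by simp) hc)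

lemma evalColoring_sum_edges :
    evalColoring (∑ e : KEdge n, X e) = rainbowCount (Fin n) 2 := by
  simp only [map_sum, evalColoring_X, rainbowCount]
  exact (sum_subtype _ (fun _ ↦ mem_powersetCard_univ) rainbow).symm

lemma evalColoring_sum_triangles :
    evalColoring (∑ S ∈ univ.filter (fun S : Finset (Fin n) => S.card = 3),
      ∏ e ∈ univ.filter (fun e : KEdge n => (e : Finset (Fin n)) ⊆ S), X e) =
      rainbowCount (Fin n) 3 := by
  rw [map_sum, rainbowCount]
  exact sum_congr (by ext; simp) fun S _ ↦ evalColoring_prod_edges S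

lemma two_mul_edgeDensity_mul_choose_two {m ρ : ℝ} (hn : 1 < n) (hρ : ρ = 1 - (m - 1) / (n - 1)) :
    2 * (ρ * n.choose 2) = n * (n - m) := by
  have hn' : (n : ℝ) - 1 ≠ 0 := sub_ne_zero.2 (Nat.one_lt_cast.2 hn).ne'
  rw [hρ, Nat.cast_choose_two]
  field_simp
  ring

lemma six_mul_goodman_bound {m ρ T : ℝ} (hn : 1 < n) (hρ : ρ = 1 - (m - 1) / (n - 1))
    (hT : T = (n.choose 3 : ℝ) -
      ((n : ℝ) * ((n : ℝ) - 1) * (1 - ρ) / 6) * ((1 + 2 * ρ) * (n : ℝ) - 2 - 2 * ρ)) :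
    6 * T = n * (n - m) * (n - 2 * m) := by
  have hn' : (n : ℝ) - 1 ≠ 0 := sub_ne_zero.2 (Nat.one_lt_cast.2 hn).ne'
  have hchoose : (n.choose 3 : ℝ) = n * (n - 1) * (n - 2) / 6 := by
    rw [Nat.cast_choose_eq_descPochhammer_div]
    simp [descPochhammer_succ_eval, Nat.factorial]
  rw [hT, hchoose, hρ]
  field_simp
  ring

end Evaluation

section Certificate

variable {n : ℕ} {k m : ℝ}

lemma pseudoExp_mul_rainbowCount_sub (hkm : k * m = n) {r : ℕ} {x : ℝ}
    (hx : r.factorial * x = ∏ j ∈ range r, (n - j * m)) {p : MvPolynomial (KEdge n) ℝ}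
    (hp : indexDeg p + r ≤ n) :
    pseudoExp k m (evalColoring p * (rainbowCount (Fin n) r - evalColoring (C x))) = 0 := by
  have hnull := factorial_smul_rainbowCount_sub_mem_nullSpace (V := Fin n) (k := k) (m := m)
    (r := r) (s := indexDeg p) (by rwa [Fintype.card_fin]) (by rwa [Fintype.card_fin, add_comm])
  have hfactor : r.factorial • rainbowCount (Fin n) r -
      (∏ j ∈ range r, (Fintype.card (Fin n) - j * m)) • 1 =
        (r.factorial : ℝ) • (rainbowCount (Fin n) r - evalColoring (C x)) := by
    rw [Fintype.card_fin, ← hx, ← algebraMap_eq, AlgHom.commutes, Algebra.algebraMap_eq_smul_one]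
    module
  rw [hfactor, Submodule.smul_mem_iff _ (by positivity)] at hnull
  exact hnull _ (evalColoring_mem_lowDegree le_rfl)

lemma pseudoExp_mul_sum_edges_sub (hkm : k * m = n) {R : ℝ} (hR : 2 * R = n * (n - m))
    {p : MvPolynomial (KEdge n) ℝ} (hp : indexDeg p + 2 ≤ n) :
    pseudoExp k m (evalColoring (p * ((∑ e, X e) - C R))) = 0 := by
  rw [map_mul, map_sub, evalColoring_sum_edges]
  exact pseudoExp_mul_rainbowCount_sub hkm (by simpa [prod_range_succ] using hR) hp

lemma pseudoExp_mul_sum_triangles_sub (hkm : k * m = n) {T : ℝ}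
    (hT : 6 * T = n * (n - m) * (n - 2 * m)) {p : MvPolynomial (KEdge n) ℝ}
    (hp : indexDeg p + 3 ≤ n) :
    pseudoExp k m (evalColoring (p *
      ((∑ S ∈ univ.filter (fun S : Finset (Fin n) => S.card = 3),
        ∏ e ∈ univ.filter (fun e : KEdge n => (e : Finset (Fin n)) ⊆ S), X e) - C T))) = 0 := by
  rw [map_mul, map_sub, evalColoring_sum_triangles]
  exact pseudoExp_mul_rainbowCount_sub hkm
    (by simpa [prod_range_succ, Nat.factorial] using hT) hp

lemma pseudoExp_sq_nonneg (hkm : k * m = n) {s : ℕ} (hn : 2 * s ≤ n) (hk : (s : ℝ) ≤ k + 1)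
    (hm : (s : ℝ) ≤ m + 1) {p : MvPolynomial (KEdge n) ℝ} (hp : indexDeg p ≤ s) :
    0 ≤ pseudoExp k m (evalColoring (p ^ 2)) := by
  rw [sq, map_mul]
  exact pseudoExp_mul_self_nonneg (by rwa [Fintype.card_fin]) (by rwa [Fintype.card_fin]) hk hm
    (evalColoring_mem_lowDegree hp)

end Certificate

section Floor

variable {x y : ℝ}

lemma toNat_floor_min_add_one_le (hx : 0 ≤ x) (hy : 0 ≤ y) :
    ((⌊min x y⌋.toNat + 1 : ℕ) : ℝ) ≤ x + 1 ∧ ((⌊min x y⌋.toNat + 1 : ℕ) : ℝ) ≤ y + 1 := by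
  have hfloor : (⌊min x y⌋.toNat : ℝ) ≤ min x y := Nat.floor_le (le_min hx hy)
  simpa using hfloor

lemma two_mul_toNat_floor_min_add_one_le {n : ℕ} (hn : 6 ≤ n) (hxy : x * y = n) (hx : 0 ≤ x)
    (hy : 0 ≤ y) : 2 * (⌊min x y⌋.toNat + 1) ≤ n := by
  obtain ⟨hpx, hpy⟩ := toNat_floor_min_add_one_le hx hy
  set p := ⌊min x y⌋.toNat
  have hsq : p * p ≤ n := by
    push_cast at hpx hpy
    have hmul := mul_le_mul (le_of_add_le_add_right hpx) (le_of_add_le_add_right hpy)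
      p.cast_nonneg hx
    exact_mod_cast hmul.trans_eq hxy
  rcases le_or_gt p 2 with h | h
  · lia
  · nlinarith

end Floor

end TriangleProblem

open TriangleProblem in
theorem triangle_problem_sos_lower_bound_general (n : ℕ) (k : ℝ) (hk : k ≠ 0) (s : ℕ)
    (hsn : 2 * s ≤ n) (hsk : s ≤ k + 1) (hsm : s ≤ n / k + 1)
    (ρ T : ℝ)
    (hρ : ρ = 1 - ((n : ℝ) / k - 1) / ((n : ℝ) - 1))
    (hT : T = (n.choose 3 : ℝ) -
      ((n : ℝ) * ((n : ℝ) - 1) * (1 - ρ) / 6) * ((1 + 2 * ρ) * (n : ℝ) - 2 - 2 * ρ)) :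
    ¬ ∃ (f : KEdge n → MvPolynomial (KEdge n) ℝ)
        (fdens ftri : MvPolynomial (KEdge n) ℝ)
        (m : ℕ) (g : Fin m → MvPolynomial (KEdge n) ℝ),
      indexDeg fdens + 2 ≤ n ∧
      indexDeg ftri + 3 ≤ n ∧
      (∀ t, indexDeg (g t) ≤ s) ∧
      (-1 : MvPolynomial (KEdge n) ℝ) =
        (∑ e, f e * (X e ^ 2 - X e)) +
        fdens * ((∑ e, X e) - C (ρ * (n.choose 2 : ℝ))) +
        ftri * ((∑ S ∈ univ.filter (fun S : Finset (Fin n) => S.card = 3),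
            ∏ e ∈ univ.filter (fun e : KEdge n => (e : Finset (Fin n)) ⊆ S), X e) - C T) +
        ∑ t, (g t) ^ 2 := by
  rintro ⟨f, fdens, ftri, r, g, hfdens, hftri, hg, hcert⟩
  have hkm : k * (n / k) = n := mul_div_cancel₀ _ hk
  have hn : 1 < n := by lia
  set E := (pseudoExp k (n / k) : ((Fin n → Fin n) → ℝ) →ₗ[ℝ] ℝ)
  have hbool : E (evalColoring (∑ e, f e * (X e ^ 2 - X e))) = 0 := by
    simp only [map_sum, map_mul, evalColoring_X_sq_sub_X, mul_zero, sum_const_zero, map_zero]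
  have hdens := pseudoExp_mul_sum_edges_sub hkm (two_mul_edgeDensity_mul_choose_two hn hρ) hfdens
  have htri := pseudoExp_mul_sum_triangles_sub hkm (six_mul_goodman_bound hn hρ hT) hftri
  have hsq : 0 ≤ E (evalColoring (∑ t, g t ^ 2)) := by
    rw [map_sum, map_sum]
    exact sum_nonneg fun t _ ↦ pseudoExp_sq_nonneg hkm hsn hsk hsm (hg t)
  have hone : E (evalColoring (-1)) = -1 := by
    rw [map_neg, map_one, map_neg, pseudoExp_one (by rwa [Fintype.card_fin])]
  rw [hcert] at hone
  simp only [map_add] at hone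
  linarith

theorem triangle_problem_sos_lower_bound (n : ℕ) (hn : 6 ≤ n) (k : ℝ)
    (hk1 : 1 ≤ k) (hkn : k ≤ n)
    (hnotint : (∀ z : ℤ, k ≠ z) ∨ (∀ z : ℤ, (n : ℝ) / k ≠ z))
    (ρ T : ℝ)
    (hρ : ρ = 1 - ((n : ℝ) / k - 1) / ((n : ℝ) - 1))
    (hT : T = (n.choose 3 : ℝ) -
      ((n : ℝ) * ((n : ℝ) - 1) * (1 - ρ) / 6) * ((1 + 2 * ρ) * (n : ℝ) - 2 - 2 * ρ)) :
    ¬ ∃ (f : KEdge n → MvPolynomial (KEdge n) ℝ)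
        (fdens ftri : MvPolynomial (KEdge n) ℝ)
        (m : ℕ) (g : Fin m → MvPolynomial (KEdge n) ℝ),
      (∀ e, indexDeg (f e) ≤ (2 * (⌊min k ((n : ℝ) / k)⌋).toNat + 2) - 2) ∧
      indexDeg fdens ≤ (2 * (⌊min k ((n : ℝ) / k)⌋).toNat + 2) - 2 ∧
      indexDeg ftri ≤ (2 * (⌊min k ((n : ℝ) / k)⌋).toNat + 2) - 3 ∧
      (∀ t, 2 * indexDeg (g t) ≤ 2 * (⌊min k ((n : ℝ) / k)⌋).toNat + 2) ∧
      (-1 : MvPolynomial (KEdge n) ℝ) =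
        (∑ e, f e * (X e ^ 2 - X e)) +
        fdens * ((∑ e, X e) - C (ρ * (n.choose 2 : ℝ))) +
        ftri * ((∑ S ∈ univ.filter (fun S : Finset (Fin n) => S.card = 3),
            ∏ e ∈ univ.filter (fun e : KEdge n => (e : Finset (Fin n)) ⊆ S), X e) - C T) +
        ∑ t, (g t) ^ 2 := by
  have hk0 : 0 < k := zero_lt_one.trans_le hk1
  have hm0 : 0 ≤ n / k := by positivity
  have hpn := TriangleProblem.two_mul_toNat_floor_min_add_one_le hn (mul_div_cancel₀ _ hk0.ne')
    hk0.le hm0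
  obtain ⟨hpk, hpm⟩ := TriangleProblem.toNat_floor_min_add_one_le hk0.le hm0
  rintro ⟨f, fdens, ftri, r, g, -, hfdens, hftri, hg, hcert⟩
  exact triangle_problem_sos_lower_bound_general n k hk0.ne' _ hpn hpk hpm ρ T hρ hT
    ⟨f, fdens, ftri, r, g, by lia, by lia, fun t ↦ by linarith [hg t], hcert⟩
end

section
/- Let n be an odd positive integer, and define a linear map Ẽ on the multilinear polynomials in the variables x_e indexed by the edges e of the complete graph Kₙ (unordered pairs of distinct elements of {1, …, n}) by: Ẽ[Π_{e∈E} x_e] = Π_{j=1}^{|E|} 1/(n − 2j + 1) if the edge set E is a partial matching (pairwise disjoint edges), and Ẽ[Π_{e∈E} x_e] = 0 otherwise (with Ẽ[1] = 1). Then for every polynomial g in these variables with 2·indexdeg(g) ≤ n, one has Ẽ[red(g²)] ≥ 0, where red denotes the multilinear reduction replacing each x_eᵗ (t ≥ 1) by x_e. -/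
open MvPolynomial Finset

/-- The multilinear reduction: replace each `x_e ^ t` (`t ≥ 1`) by `x_e` in every
monomial. -/
noncomputable def red {n : ℕ} (p : MvPolynomial (KEdge n) ℝ) : MvPolynomial (KEdge n) ℝ :=
  ∑ d ∈ p.support,
    monomial (∑ e ∈ d.support, Finsupp.single e 1) (p.coeff d)

/-- The MOD 2 principle pseudo-expectation: the linear map on multilinear polynomials
determined by `Ẽ[∏_{e∈E} x_e] = ∏_{j=1}^{|E|} 1/(n − 2j + 1)` when `E` is a partial
matching, and `0` otherwise. -/
noncomputable def Emod (n : ℕ) (p : MvPolynomial (KEdge n) ℝ) : ℝ :=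
  ∑ d ∈ p.support, p.coeff d *
    (if ∀ e ∈ d.support, ∀ e' ∈ d.support, e ≠ e' →
        Disjoint (e : Finset (Fin n)) (e' : Finset (Fin n))
     then ∏ j ∈ Finset.range d.support.card, (1 / ((n : ℝ) - 2 * j - 1))
     else 0)

/-! Let `M` be the moment matrix, with entries `Ẽ[x_S x_T]` for the edge sets `S`, `T` that cover at
most half of the vertices. The story that every vertex `a` is matched to exactly one other
translates into the relation `Ẽ[x_S] = ∑ b ≠ a, Ẽ[x_{ab} x_S]`, valid as long as `S` leaves enough
room.

*Local positivity.* For a vertex set `J` with `2|J| ≤ n`, apply this relation to the vertices of `J`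
one after the other. It writes the block of `M` indexed by the edge sets inside `J` as a nonnegative
combination of rank-one matrices, one for each partial matching that covers `J`.

*Symmetry.* Suppose `M f = μ f` with `f` nonzero at the index `S`, and let `J` be the vertex set
of `S`. Averaging `f` over the permutations that fix `J` pointwise keeps it nonzero at `S`, so `f`
may be assumed invariant. Then `M f` is a combination of averaged columns of `M`, and by the
relation above every averaged column lies in the span of the columns of edge sets inside `J`. Hence
the quadratic form of `M` at `f` is a value of the quadratic form of the local block of `J`, so
`μ ≥ 0`. -/

section Symmetry

open Matrix MulAction

section OrbitSum

variable (R G : Type*) {α : Type*} [Semiring R] [Group G] [Fintype G] [MulAction G α]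

/-- The unnormalized Reynolds operator on functions: `f` is sent to the sum of its translates by
the elements of `G`. -/
def orbitSum : (α → R) →ₗ[R] (α → R) :=
  ∑ g : G, LinearMap.funLeft R R (g • ·)

variable {R G}

lemma orbitSum_apply (f : α → R) (a : α) : orbitSum R G f a = ∑ g : G, f (g • a) := by
  simp [orbitSum, LinearMap.funLeft_apply]

lemma orbitSum_apply_smul (f : α → R) (g : G) (a : α) :
    orbitSum R G f (g • a) = orbitSum R G f a := by
  simp only [orbitSum_apply, ← mul_smul]
  exact Fintype.sum_equiv (Equiv.mulRight g) _ _ fun _ => rfl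

lemma orbitSum_comp_smul (f : α → R) (g : G) :
    orbitSum R G (fun a => f (g • a)) = orbitSum R G f := by
  ext a
  simp only [orbitSum_apply, ← mul_smul]
  exact Fintype.sum_equiv (Equiv.mulLeft g) _ _ fun _ => rfl

lemma orbitSum_apply_of_forall_smul_eq {a : α} (ha : ∀ g : G, g • a = a) (f : α → R) :
    orbitSum R G f a = Fintype.card G • f a := by
  simp [orbitSum_apply, ha]

lemma orbitSum_of_invariant {f : α → R} (hf : ∀ (g : G) a, f (g • a) = f a) :
    orbitSum R G f = Fintype.card G • f := by
  ext a
  simp [orbitSum_apply, hf]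

lemma mulVec_orbitSum [Fintype α] {A : Matrix α α R}
    (hA : ∀ (g : G) a b, A (g • a) (g • b) = A a b) (f : α → R) :
    A *ᵥ orbitSum R G f = orbitSum R G (A *ᵥ f) := by
  ext a
  simp only [mulVec, dotProduct, orbitSum_apply, mul_sum]
  rw [sum_comm]
  refine sum_congr rfl fun g _ => Fintype.sum_equiv (MulAction.toPerm g) _ _ fun b => ?_
  rw [toPerm_apply, hA]

end OrbitSum

lemma mulVec_mem_of_forall_orbitSum_col_mem {K G α : Type*} [Field K] [CharZero K] [Group G]
    [Fintype G] [MulAction G α] [Fintype α] {A : Matrix α α K}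
    (hA : ∀ (g : G) a b, A (g • a) (g • b) = A a b) {P : Submodule K (α → K)}
    (hP : ∀ b, orbitSum K G (A.col b) ∈ P) {f : α → K} (hf : ∀ (g : G) a, f (g • a) = f a) :
    A *ᵥ f ∈ P := by
  have hcard : (Fintype.card G : K) ≠ 0 := Nat.cast_ne_zero.2 Fintype.card_ne_zero
  rw [← P.smul_mem_iff hcard, Nat.cast_smul_eq_nsmul, ← mulVec_smul, ← orbitSum_of_invariant hf,
    mulVec_orbitSum hA, mulVec_eq_sum, map_sum]
  refine P.sum_mem fun b _ => ?_
  rw [op_smul_eq_smul, map_smul]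
  exact P.smul_mem _ (hP b)

lemma dotProduct_mulVec_nonneg_of_mem_span_col {α : Type*} [Fintype α] {A : Matrix α α ℝ}
    (hA : A.IsHermitian) {s : Set α} (hs : (A.submatrix ((↑) : s → α) (↑)).PosSemidef)
    {f : α → ℝ} (hf : A *ᵥ f ∈ Submodule.span ℝ (A.col '' s)) :
    0 ≤ f ⬝ᵥ A *ᵥ f := by
  classical
  rw [Set.image_eq_range, Submodule.mem_span_range_iff_exists_fun] at hf
  obtain ⟨c, hc⟩ := hf
  have hAf : A *ᵥ f = A.submatrix id ((↑) : s → α) *ᵥ c := by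
    rw [← hc, mulVec_eq_sum]
    simp only [op_smul_eq_smul]
    rfl
  have hfA : f ᵥ* A.submatrix id ((↑) : s → α) = A.submatrix (↑) (↑) *ᵥ c :=
    calc f ᵥ* A.submatrix id (↑) = s.domRestrict (Aᵀ *ᵥ f) := by
          rw [mulVec_transpose]
          rfl
      _ = s.domRestrict (A *ᵥ f) := by rw [← conjTranspose_eq_transpose_of_trivial, hA.eq]
      _ = A.submatrix (↑) (↑) *ᵥ c := by
          rw [hAf]
          rfl
  rw [hAf, dotProduct_mulVec, hfA, dotProduct_comm]
  exact hs.dotProduct_mulVec_nonneg c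

theorem posSemidef_of_forall_invariant_nonneg {G α : Type*} [Group G] [MulAction G α] [Fintype α]
    {A : Matrix α α ℝ} (hA : A.IsHermitian) (hinv : ∀ (g : G) a b, A (g • a) (g • b) = A a b)
    (H : α → Subgroup G) [∀ a, Finite (H a)] (hH : ∀ a, H a ≤ stabilizer G a)
    (hpos : ∀ a f, (∀ (g : H a) b, f (g • b) = f b) → 0 ≤ f ⬝ᵥ A *ᵥ f) :
    A.PosSemidef := by
  classical
  have (a : α) : Fintype (H a) := Fintype.ofFinite _
  have eigenvalue_nonneg {μ : ℝ} {f : α → ℝ} (hf : f ≠ 0) (hμ : A *ᵥ f = μ • f) : 0 ≤ μ := by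
    obtain ⟨a, ha⟩ := Function.ne_iff.1 hf
    set h := orbitSum ℝ (H a) f with h_def
    have h_ne : h ≠ 0 := by
      refine Function.ne_iff.2 ⟨a, ?_⟩
      rw [h_def, orbitSum_apply_of_forall_smul_eq fun g : H a => hH a g.2]
      exact smul_ne_zero Fintype.card_ne_zero ha
    have h_eigen : A *ᵥ h = μ • h := by
      rw [h_def, mulVec_orbitSum fun g : H a => hinv g, hμ, map_smul]
    have hnonneg : 0 ≤ μ * (h ⬝ᵥ h) := by
      simpa [h_eigen] using hpos a h (orbitSum_apply_smul f)
    exact nonneg_of_mul_nonneg_left hnonneg (dotProduct_self_star_pos_iff.2 h_ne)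
  rw [hA.posSemidef_iff_eigenvalues_nonneg]
  refine fun i => eigenvalue_nonneg ?_ (hA.mulVec_eigenvectorBasis i)
  exact fun h => hA.eigenvectorBasis.orthonormal.ne_zero i (by ext a; exact congrFun h a)

theorem posSemidef_of_orbitSum_col_mem_span {G α : Type*} [Group G] [MulAction G α] [Finite α]
    {A : Matrix α α ℝ} (hA : A.IsHermitian) (hinv : ∀ (g : G) a b, A (g • a) (g • b) = A a b)
    (H : α → Subgroup G) [∀ a, Fintype (H a)] (hH : ∀ a, H a ≤ stabilizer G a) (s : α → Set α)
    (hs : ∀ a, (A.submatrix ((↑) : s a → α) (↑)).PosSemidef)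
    (hspan : ∀ a b, orbitSum ℝ (H a) (A.col b) ∈ Submodule.span ℝ (A.col '' s a)) :
    A.PosSemidef := by
  have := Fintype.ofFinite α
  exact posSemidef_of_forall_invariant_nonneg hA hinv H hH fun a _ hf =>
    dotProduct_mulVec_nonneg_of_mem_span_col hA (hs a)
      (mulVec_mem_of_forall_orbitSum_col_mem (fun g : H a => hinv g) (hspan a) hf)

end Symmetry

section Matchings

variable {V : Type*}

/-- A partial matching of the complete graph on `V`, whose edges are the two-element subsets
of `V`. -/
def IsPartialMatching (S : Finset (Finset V)) : Prop :=
  (∀ e ∈ S, #e = 2) ∧ (S : Set (Finset V)).PairwiseDisjoint id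

lemma IsPartialMatching.mono {S T : Finset (Finset V)} (hT : IsPartialMatching T) (h : S ⊆ T) :
    IsPartialMatching S :=
  ⟨fun e he => hT.1 e (h he), hT.2.subset (coe_subset.2 h)⟩

open scoped Classical in
/-- The pseudo-expectation of the monomial `∏ e ∈ S, x_e` for the complete graph on `V`. It is
defined for an arbitrary set `S` of subsets of `V`, so that no edge has to be carried as a
subtype. -/
noncomputable def matchingMoment [Fintype V] (S : Finset (Finset V)) : ℝ :=
  if IsPartialMatching S then ∏ j ∈ range #S, (1 / ((Fintype.card V : ℝ) - 2 * j - 1)) else 0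

lemma matchingMoment_eq_zero [Fintype V] {S : Finset (Finset V)} (hS : ¬ IsPartialMatching S) :
    matchingMoment S = 0 :=
  if_neg hS

variable [DecidableEq V]

/-- The set of vertices covered by an edge set. -/
def verts (S : Finset (Finset V)) : Finset V := S.biUnion id

lemma mem_verts {S : Finset (Finset V)} {a : V} : a ∈ verts S ↔ ∃ e ∈ S, a ∈ e := by
  simp [verts]

lemma verts_union (S T : Finset (Finset V)) : verts (S ∪ T) = verts S ∪ verts T :=
  union_biUnion

lemma verts_insert_pair (a b : V) (S : Finset (Finset V)) :
    verts (insert {a, b} S) = insert a (insert b (verts S)) := by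
  simp [verts, biUnion_insert, insert_union, singleton_union]

lemma pair_notMem_of_notMem_verts {S : Finset (Finset V)} {a : V} (ha : a ∉ verts S) (b : V) :
    {a, b} ∉ S :=
  fun h => ha (mem_verts.2 ⟨_, h, mem_insert_self a {b}⟩)

lemma card_verts_insert_pair_le (a b : V) (S : Finset (Finset V)) :
    #(verts (insert {a, b} S)) ≤ #(verts S) + 2 := by
  rw [verts_insert_pair]
  exact (card_insert_le _ _).trans (Nat.succ_le_succ (card_insert_le _ _))

lemma card_verts_insert_pair {a b : V} {S : Finset (Finset V)} (hab : a ≠ b) (ha : a ∉ verts S)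
    (hb : b ∉ verts S) : #(verts (insert {a, b} S)) = #(verts S) + 2 := by
  rw [verts_insert_pair, card_insert_of_notMem (by simp [hab, ha]), card_insert_of_notMem hb]

namespace IsPartialMatching

lemma card_verts {S : Finset (Finset V)} (hS : IsPartialMatching S) : #(verts S) = 2 * #S := by
  rw [verts, card_biUnion fun _ h _ h' hne => hS.2 h h' hne]
  simp only [id]
  rw [sum_congr rfl hS.1, sum_const, smul_eq_mul, mul_comm]

lemma insert_pair {a b : V} {S : Finset (Finset V)} (hS : IsPartialMatching S) (hab : a ≠ b)
    (ha : a ∉ verts S) (hb : b ∉ verts S) : IsPartialMatching (insert {a, b} S) := by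
  refine ⟨forall_mem_insert _ _ _ |>.2 ⟨card_pair hab, hS.1⟩, ?_⟩
  rw [coe_insert]
  refine hS.2.insert fun e he _ => ?_
  simp only [id, disjoint_insert_left, disjoint_singleton_left]
  exact ⟨fun h => ha (mem_verts.2 ⟨e, he, h⟩), fun h => hb (mem_verts.2 ⟨e, he, h⟩)⟩

lemma notMem_verts_of_insert {a : V} {e : Finset V} {S : Finset (Finset V)}
    (h : IsPartialMatching (insert e S)) (he : e ∉ S) (ha : a ∈ e) : a ∉ verts S := by
  intro haS
  obtain ⟨e', he', ha'⟩ := mem_verts.1 haS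
  exact disjoint_left.1 (h.2 (mem_insert_self e S) (mem_insert_of_mem he')
    (ne_of_mem_of_not_mem he' he).symm) ha ha'

lemma exists_eq_insert_pair {a : V} {S : Finset (Finset V)} (hS : IsPartialMatching S)
    (ha : a ∈ verts S) :
    ∃ b T, a ≠ b ∧ a ∉ verts T ∧ b ∉ verts T ∧ S = insert {a, b} T := by
  obtain ⟨e, he, hae⟩ := mem_verts.1 ha
  obtain ⟨b, hab, rfl⟩ : ∃ b, a ≠ b ∧ e = {a, b} := by
    obtain ⟨x, y, hxy, rfl⟩ := card_eq_two.1 (hS.1 e he)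
    obtain rfl | rfl : a = x ∨ a = y := by simpa using hae
    exacts [⟨y, hxy, rfl⟩, ⟨x, hxy.symm, pair_comm _ _⟩]
  have hS' : IsPartialMatching (insert {a, b} (S.erase {a, b})) := by rwa [insert_erase he]
  exact ⟨b, S.erase {a, b}, hab, hS'.notMem_verts_of_insert (notMem_erase _ _) (by simp),
    hS'.notMem_verts_of_insert (notMem_erase _ _) (by simp), (insert_erase he).symm⟩

lemma subset_of_verts_subset {S T : Finset (Finset V)} (h : IsPartialMatching (S ∪ T))
    (hST : verts S ⊆ verts T) : S ⊆ T := by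
  intro e he
  by_contra heT
  obtain ⟨a, ha⟩ : e.Nonempty := by
    rw [← card_pos, h.1 e (mem_union_left T he)]
    exact two_pos
  have hins : IsPartialMatching (insert e T) :=
    h.mono (insert_subset (mem_union_left T he) subset_union_right)
  exact hins.notMem_verts_of_insert heT ha (hST (mem_verts.2 ⟨e, he, ha⟩))

end IsPartialMatching

section Action

open scoped Pointwise

variable {G : Type*} [Group G] [MulAction G V]

lemma verts_smul (g : G) (S : Finset (Finset V)) : verts (g • S) = g • verts S := by
  simp only [verts, smul_finset_def, image_biUnion, biUnion_image]
  rfl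

lemma IsPartialMatching.smul {S : Finset (Finset V)} (hS : IsPartialMatching S) (g : G) :
    IsPartialMatching (g • S) := by
  refine ⟨fun _ hge => ?_, fun _ hge _ hge' hne => ?_⟩
  · obtain ⟨e, he, rfl⟩ := mem_smul_finset.1 hge
    rw [card_smul_finset, hS.1 e he]
  · obtain ⟨e, he, rfl⟩ := mem_smul_finset.1 (mem_coe.1 hge)
    obtain ⟨e', he', rfl⟩ := mem_smul_finset.1 (mem_coe.1 hge')
    have hdisj : Disjoint e e' := hS.2 he he' fun h => hne (h ▸ rfl)
    exact (disjoint_image (MulAction.injective g)).2 hdisj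

lemma isPartialMatching_smul_iff {g : G} {S : Finset (Finset V)} :
    IsPartialMatching (g • S) ↔ IsPartialMatching S :=
  ⟨fun h => by simpa using h.smul g⁻¹, fun h => h.smul g⟩

lemma smul_eq_of_forall_mem_verts {g : G} {S : Finset (Finset V)}
    (h : ∀ a ∈ verts S, g • a = a) : g • S = S := by
  have hedge : ∀ e ∈ S, g • e = e := fun e he =>
    (image_congr fun a ha => h a (mem_verts.2 ⟨e, he, ha⟩)).trans image_id
  exact (image_congr hedge).trans image_id

/-- The group over which columns of the moment matrix are averaged: the permutations of `V` that
fix every element of `J`. -/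
abbrev pointwiseStabilizer {V : Type*} (J : Finset V) : Subgroup (Equiv.Perm V) :=
  fixingSubgroup (Equiv.Perm V) (J : Set V)

lemma smul_eq_self_of_verts_subset {J : Finset V} {S : Finset (Finset V)}
    (hS : verts S ⊆ J) (g : pointwiseStabilizer J) : g • S = S :=
  smul_eq_of_forall_mem_verts fun a ha => g.2 ⟨a, hS ha⟩

end Action

variable [Fintype V]

omit [DecidableEq V] in
lemma matchingMoment_nonneg (S : Finset (Finset V)) : 0 ≤ matchingMoment S := by
  classical
  unfold matchingMoment
  split_ifs with hS
  · refine prod_nonneg fun j hj => one_div_nonneg.2 ?_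
    have hcard : 2 * (j + 1) ≤ Fintype.card V :=
      (Nat.mul_le_mul_left 2 (mem_range.1 hj)).trans (hS.card_verts ▸ card_le_univ _)
    have : (2 * (j + 1) : ℝ) ≤ Fintype.card V := mod_cast hcard
    linarith
  · rfl

lemma matchingMoment_insert_pair {a b : V} {S : Finset (Finset V)} (hab : a ≠ b)
    (ha : a ∉ verts S) (hb : b ∉ verts S) :
    matchingMoment (insert {a, b} S) =
      matchingMoment S / ((Fintype.card V : ℝ) - #(verts S) - 1) := by
  by_cases hS : IsPartialMatching S
  · rw [matchingMoment, matchingMoment, if_pos (hS.insert_pair hab ha hb), if_pos hS,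
      card_insert_of_notMem (pair_notMem_of_notMem_verts ha b), prod_range_succ, hS.card_verts]
    push_cast
    ring
  · rw [matchingMoment_eq_zero hS, zero_div,
      matchingMoment_eq_zero fun h => hS (h.mono (subset_insert _ _))]

lemma matchingMoment_insert_eq_zero {a : V} {e : Finset V} {S : Finset (Finset V)}
    (ha : a ∈ verts S) (hae : a ∈ e) (he : e ∉ S) : matchingMoment (insert e S) = 0 :=
  matchingMoment_eq_zero fun h => h.notMem_verts_of_insert he hae ha

lemma matchingMoment_union_of_verts_subset {S T : Finset (Finset V)} (h : verts S ⊆ verts T) :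
    matchingMoment (S ∪ T) = if S ⊆ T then matchingMoment T else 0 := by
  split_ifs with hST
  · rw [union_eq_right.2 hST]
  · exact matchingMoment_eq_zero fun hM => hST (hM.subset_of_verts_subset h)

lemma matchingMoment_eq_sum_of_mem_verts {a : V} {S : Finset (Finset V)} (ha : a ∈ verts S) :
    matchingMoment S = ∑ b ∈ univ.erase a, matchingMoment (insert {a, b} S) := by
  by_cases hS : IsPartialMatching S
  · obtain ⟨c, T, hac, haT, -, rfl⟩ := hS.exists_eq_insert_pair ha
    rw [sum_eq_single_of_mem c (mem_erase.2 ⟨hac.symm, mem_univ c⟩), insert_idem]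
    intro b hba hbc
    have hpair : ({a, b} : Finset V) ≠ {a, c} := fun h => by
      have hb : b ∈ ({a, c} : Finset V) := h ▸ by simp
      simp [hbc, ne_of_mem_erase hba] at hb
    refine matchingMoment_insert_eq_zero ha (mem_insert_self a {b}) ?_
    exact mem_insert.not.2 (not_or.2 ⟨hpair, pair_notMem_of_notMem_verts haT b⟩)
  · rw [matchingMoment_eq_zero hS, sum_eq_zero]
    exact fun b _ => matchingMoment_eq_zero fun h => hS (h.mono (subset_insert _ _))

lemma matchingMoment_eq_sum_of_notMem_verts {a : V} {S : Finset (Finset V)} (ha : a ∉ verts S)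
    (hcard : #(verts S) + 1 < Fintype.card V) :
    matchingMoment S = ∑ b ∈ univ.erase a, matchingMoment (insert {a, b} S) := by
  have hcard_free : (#((verts S)ᶜ.erase a) : ℝ) = Fintype.card V - #(verts S) - 1 := by
    rw [card_erase_of_mem (mem_compl.2 ha), card_compl, Nat.cast_sub (by lia),
      Nat.cast_sub (by lia), Nat.cast_one]
  have hpos : (0 : ℝ) < Fintype.card V - #(verts S) - 1 := by
    rw [← hcard_free, Nat.cast_pos, card_erase_of_mem (mem_compl.2 ha), card_compl]
    lia
  calc matchingMoment S
      = ∑ b ∈ (verts S)ᶜ.erase a, matchingMoment S / (Fintype.card V - #(verts S) - 1) := by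
        rw [sum_const, nsmul_eq_mul, hcard_free, mul_div_cancel₀ _ hpos.ne']
    _ = ∑ b ∈ (verts S)ᶜ.erase a, matchingMoment (insert {a, b} S) := by
        refine sum_congr rfl fun b hb => ?_
        obtain ⟨hba, hb⟩ := mem_erase.1 hb
        rw [matchingMoment_insert_pair hba.symm ha (mem_compl.1 hb)]
    _ = ∑ b ∈ univ.erase a, matchingMoment (insert {a, b} S) := by
        refine sum_subset (erase_subset_erase a (subset_univ _)) fun b hb hb' => ?_
        have hbS : b ∈ verts S := by
          by_contra h
          exact hb' (mem_erase.2 ⟨ne_of_mem_erase hb, mem_compl.2 h⟩)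
        exact matchingMoment_insert_eq_zero hbS (by simp) (pair_notMem_of_notMem_verts ha b)

theorem matchingMoment_eq_sum_insert_pair (a : V) {S : Finset (Finset V)}
    (hcard : a ∉ verts S → #(verts S) + 1 < Fintype.card V) :
    matchingMoment S = ∑ b ∈ univ.erase a, matchingMoment (insert {a, b} S) := by
  by_cases ha : a ∈ verts S
  · exact matchingMoment_eq_sum_of_mem_verts ha
  · exact matchingMoment_eq_sum_of_notMem_verts ha (hcard ha)

section LocalPositivity

open Matrix

variable {ι : Type*} {J : Finset V} {T : ι → Finset (Finset V)}

lemma posSemidef_matchingMoment_of_subset_verts [Finite ι] (hT : ∀ i, verts (T i) ⊆ J)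
    {C : Finset (Finset V)} (hJC : J ⊆ verts C) :
    (Matrix.of fun i j => matchingMoment (T i ∪ T j ∪ C)).PosSemidef := by
  set u : ι → ℝ := fun i => if T i ⊆ C then 1 else 0 with u_def
  have hrank_one : (Matrix.of fun i j => matchingMoment (T i ∪ T j ∪ C)) =
      matchingMoment C • vecMulVec u (star u) := by
    ext i j
    rw [of_apply, matchingMoment_union_of_verts_subset, Matrix.smul_apply, vecMulVec_apply]
    · simp [u_def, union_subset_iff, ← ite_and, and_comm]
    · rw [verts_union]
      exact (union_subset (hT i) (hT j)).trans hJC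
  rw [hrank_one]
  exact (posSemidef_vecMulVec_self_star u).smul (matchingMoment_nonneg C)

lemma matchingMoment_union_eq_sum (hT : ∀ i, verts (T i) ⊆ J) {C : Finset (Finset V)}
    {a : V} (ha : a ∈ J \ verts C) (hC : #(verts C) + #(J \ verts C) < Fintype.card V) (i j : ι) :
    matchingMoment (T i ∪ T j ∪ C) =
      ∑ b ∈ univ.erase a, matchingMoment (T i ∪ T j ∪ insert {a, b} C) := by
  simp only [union_insert]
  refine matchingMoment_eq_sum_insert_pair a fun haT => ?_
  have hsub : insert a (verts (T i ∪ T j ∪ C)) ⊆ verts C ∪ J \ verts C := by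
    simp only [verts_union]
    grind
  calc #(verts (T i ∪ T j ∪ C)) + 1 = #(insert a (verts (T i ∪ T j ∪ C))) :=
        (card_insert_of_notMem haT).symm
    _ ≤ #(verts C) + #(J \ verts C) := (card_le_card hsub).trans (card_union_le _ _)
    _ < Fintype.card V := hC

theorem posSemidef_matchingMoment_union_of_verts_subset [Finite ι] (hT : ∀ i, verts (T i) ⊆ J)
    (C : Finset (Finset V)) (hC : #(verts C) + 2 * #(J \ verts C) ≤ Fintype.card V) :
    (Matrix.of fun i j => matchingMoment (T i ∪ T j ∪ C)).PosSemidef := by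
  induction hk : #(J \ verts C) using Nat.strong_induction_on generalizing C with
  | _ k ih =>
  obtain hJC | ⟨a, ha⟩ := (J \ verts C).eq_empty_or_nonempty
  · exact posSemidef_matchingMoment_of_subset_verts hT (sdiff_eq_empty_iff_subset.1 hJC)
  have hJpos : 0 < #(J \ verts C) := card_pos.2 ⟨a, ha⟩
  have hsum : (Matrix.of fun i j => matchingMoment (T i ∪ T j ∪ C)) =
      ∑ b ∈ univ.erase a, Matrix.of fun i j => matchingMoment (T i ∪ T j ∪ insert {a, b} C) := by
    ext i j
    rw [Matrix.sum_apply]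
    exact matchingMoment_union_eq_sum hT ha (by lia) i j
  rw [hsum]
  refine posSemidef_sum _ fun b _ => ?_
  by_cases hb : b ∈ verts C
  · have haC : {a, b} ∉ C := pair_notMem_of_notMem_verts (mem_sdiff.1 ha).2 b
    convert PosSemidef.zero (n := ι) (R := ℝ)
    ext i j
    refine matchingMoment_eq_zero fun h => ?_
    exact (h.mono subset_union_right).notMem_verts_of_insert haC (by simp) hb
  · have hsub : J \ verts (insert {a, b} C) ⊆ (J \ verts C).erase a := by
      rw [verts_insert_pair]
      grind
    have hcard := card_le_card hsub
    rw [card_erase_of_mem ha] at hcard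
    have hverts := card_verts_insert_pair_le a b C
    exact ih _ (by lia) _ (by lia) rfl

end LocalPositivity

section MomentMatrix

open Matrix
open scoped Pointwise

lemma matchingMoment_smul {G : Type*} [Group G] [MulAction G V] (g : G) (S : Finset (Finset V)) :
    matchingMoment (g • S) = matchingMoment S := by
  classical
  rw [matchingMoment, card_smul_finset]
  exact if_congr isPartialMatching_smul_iff rfl rfl

variable (V) in
/-- The index set of the moment matrix: the edge sets that cover at most half of the vertices, with
the action of the symmetric group. -/
def halfSets : SubMulAction (Equiv.Perm V) (Finset (Finset V)) where
  carrier := {S | 2 * #(verts S) ≤ Fintype.card V}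
  smul_mem' g S hS := by
    rwa [Set.mem_ofPred_eq, verts_smul, card_smul_finset]

/-- The column of the moment matrix attached to the edge set `S`; unlike the columns of the actual
matrix, it is defined for every `S`. -/
noncomputable def momentVec (S : Finset (Finset V)) : halfSets V → ℝ :=
  fun Y => matchingMoment (Y ∪ S)

lemma momentVec_eq_zero {S : Finset (Finset V)} (hS : ¬ IsPartialMatching S) : momentVec S = 0 :=
  funext fun _ => matchingMoment_eq_zero fun h => hS (h.mono subset_union_right)

lemma momentVec_eq_sum_insert_pair (a : V) {S : Finset (Finset V)}
    (hS : 2 * (#(verts S) + 2) ≤ Fintype.card V) :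
    momentVec S = ∑ b ∈ univ.erase a, momentVec (insert {a, b} S) := by
  ext ⟨Y, hY⟩
  simp only [momentVec, Finset.sum_apply, union_insert]
  refine matchingMoment_eq_sum_insert_pair a fun _ => ?_
  have hY : 2 * #(verts Y) ≤ Fintype.card V := hY
  have hunion : #(verts (Y ∪ S)) ≤ #(verts Y) + #(verts S) := by
    rw [verts_union]
    exact card_union_le _ _
  lia

lemma momentVec_apply_smul (S : Finset (Finset V)) (g : Equiv.Perm V) (Y : halfSets V) :
    momentVec S (g • Y) = momentVec (g⁻¹ • S) Y := by
  rw [momentVec, momentVec, ← matchingMoment_smul g⁻¹, smul_finset_union, SubMulAction.val_smul,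
    inv_smul_smul]

noncomputable instance (J : Finset V) : Fintype (pointwiseStabilizer J) := Fintype.ofFinite _

variable {J : Finset V}

lemma orbitSum_momentVec_smul (g : pointwiseStabilizer J) (S : Finset (Finset V)) :
    orbitSum ℝ (pointwiseStabilizer J) (momentVec (g • S)) =
      orbitSum ℝ (pointwiseStabilizer J) (momentVec S) := by
  rw [← orbitSum_comp_smul (momentVec S) g⁻¹]
  refine congrArg _ (funext fun Y => ?_)
  rw [Subgroup.smul_def g⁻¹, momentVec_apply_smul, ← Subgroup.coe_inv, inv_inv]
  rfl

lemma orbitSum_momentVec_of_verts_subset {S : Finset (Finset V)} (hS : verts S ⊆ J) :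
    orbitSum ℝ (pointwiseStabilizer J) (momentVec S) =
      Fintype.card (pointwiseStabilizer J) • momentVec S := by
  refine orbitSum_of_invariant fun g Y => ?_
  rw [Subgroup.smul_def, momentVec_apply_smul, ← Subgroup.coe_inv, ← Subgroup.smul_def,
    smul_eq_self_of_verts_subset hS]

lemma orbitSum_momentVec_insert_pair_eq {a b c : V} {S : Finset (Finset V)} (hab : a ≠ b)
    (hac : a ≠ c) (hbJ : b ∉ J) (hcJ : c ∉ J) (hb : b ∉ verts S) (hc : c ∉ verts S) :
    orbitSum ℝ (pointwiseStabilizer J) (momentVec (insert {a, b} S)) =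
      orbitSum ℝ (pointwiseStabilizer J) (momentVec (insert {a, c} S)) := by
  have swap_fixes {x : V} (hxb : x ≠ b) (hxc : x ≠ c) : Equiv.swap b c • x = x :=
    Equiv.swap_apply_of_ne_of_ne hxb hxc
  let g : pointwiseStabilizer J := ⟨Equiv.swap b c, fun x =>
    swap_fixes (ne_of_mem_of_not_mem x.2 hbJ) (ne_of_mem_of_not_mem x.2 hcJ)⟩
  have hgS : Equiv.swap b c • S = S := smul_eq_of_forall_mem_verts fun x hx =>
    swap_fixes (ne_of_mem_of_not_mem hx hb) (ne_of_mem_of_not_mem hx hc)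
  have hg : g • insert {a, b} S = insert {a, c} S := by
    change Equiv.swap b c • insert {a, b} S = _
    rw [smul_finset_insert, hgS, smul_finset_insert, smul_finset_singleton, swap_fixes hab hac,
      Equiv.Perm.smul_def, Equiv.swap_apply_left]
  rw [← hg, orbitSum_momentVec_smul]

-- After symmetrization, all the partners of `a` outside `J` and `S` contribute the same vector to
-- the sum over the partners of `a`, so this vector is determined by the remaining terms.
lemma orbitSum_momentVec_insert_pair_mem {P : Submodule ℝ (halfSets V → ℝ)} {a b : V}
    {S : Finset (Finset V)} (hab : a ≠ b) (ha : a ∉ verts S) (hb : b ∉ verts S) (hbJ : b ∉ J)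
    (hcard : 2 * (#(verts S) + 2) ≤ Fintype.card V)
    (hS : orbitSum ℝ (pointwiseStabilizer J) (momentVec S) ∈ P)
    (hJ : ∀ c ∈ J, orbitSum ℝ (pointwiseStabilizer J) (momentVec (insert {a, c} S)) ∈ P) :
    orbitSum ℝ (pointwiseStabilizer J) (momentVec (insert {a, b} S)) ∈ P := by
  set φ : V → halfSets V → ℝ := fun c =>
    orbitSum ℝ (pointwiseStabilizer J) (momentVec (insert {a, c} S)) with φ_def
  set free : Finset V := {c ∈ univ.erase a | c ∉ J ∧ c ∉ verts S} with free_def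
  have hfree : ∑ c ∈ free, φ c = #free • φ b := sum_eq_card_nsmul fun c hc => by
    obtain ⟨hca, hcJ, hcS⟩ := mem_filter.1 hc
    exact orbitSum_momentVec_insert_pair_eq (ne_of_mem_erase hca).symm hab hcJ hbJ hcS hb
  have hrest : ∑ c ∈ univ.erase a with ¬ (c ∉ J ∧ c ∉ verts S), φ c ∈ P := by
    refine P.sum_mem fun c hc => ?_
    obtain hcJ | hcS : c ∈ J ∨ c ∈ verts S := by
      simpa only [not_and_or, not_not] using (mem_filter.1 hc).2
    · exact hJ c hcJ
    · have hM : ¬ IsPartialMatching (insert {a, c} S) := fun h =>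
        h.notMem_verts_of_insert (pair_notMem_of_notMem_verts ha c) (by simp) hcS
      simp only [φ_def, momentVec_eq_zero hM, map_zero, P.zero_mem]
  have htotal : #free • φ b ∈ P := by
    rw [momentVec_eq_sum_insert_pair a hcard, map_sum,
      ← sum_filter_add_sum_filter_not _ fun c => c ∉ J ∧ c ∉ verts S] at hS
    exact hfree ▸ (P.add_mem_iff_left hrest).1 hS
  have hfree_pos : (#free : ℝ) ≠ 0 :=
    Nat.cast_ne_zero.2 (card_ne_zero_of_mem (a := b) (by simp [free_def, hab.symm, hb, hbJ]))
  rwa [← Nat.cast_smul_eq_nsmul ℝ, P.smul_mem_iff hfree_pos] at htotal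

theorem orbitSum_momentVec_mem_span (J : Finset V) (S : Finset (Finset V))
    (hS : 2 * #(verts S) ≤ Fintype.card V) :
    orbitSum ℝ (pointwiseStabilizer J) (momentVec S) ∈
      Submodule.span ℝ (momentVec '' {R | verts R ⊆ J}) := by
  induction hk : #(verts S \ J) using Nat.strong_induction_on generalizing S with
  | _ k ih =>
  by_cases hM : IsPartialMatching S
  swap
  · simp only [momentVec_eq_zero hM, map_zero, Submodule.zero_mem]
  obtain hSJ | ⟨b, hb⟩ := (verts S \ J).eq_empty_or_nonempty
  · have hSJ : verts S ⊆ J := sdiff_eq_empty_iff_subset.1 hSJ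
    rw [orbitSum_momentVec_of_verts_subset hSJ]
    exact nsmul_mem (Submodule.subset_span (Set.mem_image_of_mem momentVec hSJ)) _
  obtain ⟨hbS, hbJ⟩ := mem_sdiff.1 hb
  obtain ⟨a, S, hba, hb', ha', rfl⟩ := hM.exists_eq_insert_pair hbS
  have hpos : 0 < #(verts (insert {b, a} S) \ J) := card_pos.2 ⟨b, hb⟩
  have ih_of_subset {R : Finset (Finset V)} (hR : #(verts R) ≤ #(verts S) + 2)
      (hsub : verts R \ J ⊆ (verts (insert {b, a} S) \ J).erase b) :
      orbitSum ℝ (pointwiseStabilizer J) (momentVec R) ∈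
        Submodule.span ℝ (momentVec '' {R | verts R ⊆ J}) := by
    have hlt := card_le_card hsub
    rw [card_erase_of_mem hb] at hlt
    rw [card_verts_insert_pair hba hb' ha'] at hS
    exact ih _ (by lia) R (by lia) rfl
  rw [card_verts_insert_pair hba hb' ha'] at hS
  rw [pair_comm]
  refine orbitSum_momentVec_insert_pair_mem hba.symm ha' hb' hbJ hS ?_ fun c hc => ?_
  · refine ih_of_subset (Nat.le_add_right _ _) ?_
    rw [verts_insert_pair]
    grind
  · refine ih_of_subset (card_verts_insert_pair_le a c S) ?_
    rw [verts_insert_pair, verts_insert_pair]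
    grind

variable (V) in
/-- The moment matrix of the pseudo-expectation, indexed by the edge sets that cover at most half
of the vertices. -/
noncomputable def momentMatrix : Matrix (halfSets V) (halfSets V) ℝ :=
  of fun S T => matchingMoment (S.1 ∪ T.1)

lemma posSemidef_momentMatrix_submatrix (S : halfSets V) :
    ((momentMatrix V).submatrix ((↑) : {R : halfSets V | verts R.1 ⊆ verts S.1} → halfSets V)
      (↑)).PosSemidef := by
  have hcard : #(verts (∅ : Finset (Finset V))) + 2 * #(verts S.1 \ verts ∅) ≤ Fintype.card V := by
    have hS : 2 * #(verts S.1) ≤ Fintype.card V := S.2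
    simpa [verts] using hS
  convert posSemidef_matchingMoment_union_of_verts_subset
    (fun R : {R : halfSets V | verts R.1 ⊆ verts S.1} => R.2) ∅ hcard using 1
  ext R R'
  simp [momentMatrix]

theorem posSemidef_momentMatrix : (momentMatrix V).PosSemidef := by
  have hsymm : (momentMatrix V).IsHermitian := by
    ext S T
    simp [momentMatrix, union_comm]
  have hinv (g : Equiv.Perm V) (S T : halfSets V) :
      momentMatrix V (g • S) (g • T) = momentMatrix V S T := by
    simp only [momentMatrix, of_apply, SubMulAction.val_smul, ← smul_finset_union,
      matchingMoment_smul]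
  refine posSemidef_of_orbitSum_col_mem_span hsymm hinv (fun S => pointwiseStabilizer (verts S.1))
    (fun S g hg => Subtype.ext (smul_eq_self_of_verts_subset Subset.rfl ⟨g, hg⟩))
    _ posSemidef_momentMatrix_submatrix fun S T => ?_
  refine Submodule.span_mono ?_ (orbitSum_momentVec_mem_span (verts S.1) T.1 T.2)
  rintro _ ⟨R, hR, rfl⟩
  have hR' : R ∈ halfSets V := (Nat.mul_le_mul_left 2 (card_le_card hR)).trans S.2
  exact ⟨⟨R, hR'⟩, hR, rfl⟩

theorem posSemidef_matchingMoment_union {ι : Type*} {T : ι → Finset (Finset V)}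
    (hT : ∀ i, 2 * #(verts (T i)) ≤ Fintype.card V) :
    (Matrix.of fun i j => matchingMoment (T i ∪ T j)).PosSemidef :=
  posSemidef_momentMatrix.submatrix fun i => (⟨T i, hT i⟩ : halfSets V)

end MomentMatrix

end Matchings

section Polynomials

variable {n : ℕ}

/-- The edges whose variables occur in the monomial with exponent vector `m`. -/
def edgeSet (m : KEdge n →₀ ℕ) : Finset (Finset (Fin n)) :=
  m.support.map (Function.Embedding.subtype _)

lemma mem_edgeSet {m : KEdge n →₀ ℕ} {e : Finset (Fin n)} :
    e ∈ edgeSet m ↔ ∃ e' ∈ m.support, e'.1 = e :=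
  mem_map

lemma edgeSet_add (m m' : KEdge n →₀ ℕ) : edgeSet (m + m') = edgeSet m ∪ edgeSet m' := by
  have hsupport : (m + m').support = m.support ∪ m'.support := by
    ext e
    simp [imp_iff_not_or]
  rw [edgeSet, hsupport, map_union, edgeSet, edgeSet]

lemma edgeSet_sum_single (m : KEdge n →₀ ℕ) :
    edgeSet (∑ e ∈ m.support, Finsupp.single e 1) = edgeSet m := by
  rw [edgeSet, edgeSet]
  congr 1
  ext e
  simp [Finsupp.finsetSum_apply, Finsupp.single_apply]

lemma isPartialMatching_edgeSet_iff {m : KEdge n →₀ ℕ} :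
    IsPartialMatching (edgeSet m) ↔
      ∀ e ∈ m.support, ∀ e' ∈ m.support, e ≠ e' → Disjoint e.1 e'.1 := by
  have hcard : ∀ e ∈ edgeSet m, #e = 2 := fun e he => by
    obtain ⟨e, -, rfl⟩ := mem_edgeSet.1 he
    exact e.2
  rw [IsPartialMatching, and_iff_right hcard, edgeSet, coe_map,
    (Function.Embedding.injective _).injOn.pairwiseDisjoint_image]
  rfl

lemma matchingMoment_edgeSet (m : KEdge n →₀ ℕ) :
    matchingMoment (edgeSet m) =
      if ∀ e ∈ m.support, ∀ e' ∈ m.support, e ≠ e' → Disjoint e.1 e'.1 then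
        ∏ j ∈ range #m.support, (1 / ((n : ℝ) - 2 * j - 1))
      else 0 := by
  classical
  rw [matchingMoment, edgeSet, card_map, Fintype.card_fin]
  exact if_congr isPartialMatching_edgeSet_iff rfl rfl

lemma card_verts_edgeSet_le_indexDeg {p : MvPolynomial (KEdge n) ℝ} {m : KEdge n →₀ ℕ}
    (hm : m ∈ p.support) : #(verts (edgeSet m)) ≤ indexDeg p := by
  rw [verts, edgeSet, map_eq_image, image_biUnion]
  exact le_sup (f := fun d : KEdge n →₀ ℕ => #(d.support.biUnion fun e => e.1)) hm

variable (n) in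
/-- `Emod` as a bundled linear map, so that products can be expanded into monomials under it. -/
noncomputable def momentFunctional : MvPolynomial (KEdge n) ℝ →ₗ[ℝ] ℝ :=
  (basisMonomials (KEdge n) ℝ).constr ℝ fun m => matchingMoment (edgeSet m)

lemma momentFunctional_monomial (m : KEdge n →₀ ℕ) (c : ℝ) :
    momentFunctional n (monomial m c) = c * matchingMoment (edgeSet m) := by
  have hbasis : monomial m c = c • basisMonomials (KEdge n) ℝ m := by simp [smul_monomial]
  rw [hbasis, map_smul, momentFunctional, Module.Basis.constr_basis, smul_eq_mul]

lemma momentFunctional_eq_sum (p : MvPolynomial (KEdge n) ℝ) :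
    momentFunctional n p = ∑ m ∈ p.support, p.coeff m * matchingMoment (edgeSet m) := by
  conv_lhs => rw [p.as_sum]
  simp only [map_sum, momentFunctional_monomial]

lemma momentFunctional_mul (p q : MvPolynomial (KEdge n) ℝ) :
    momentFunctional n (p * q) = ∑ m ∈ p.support, ∑ m' ∈ q.support,
      p.coeff m * q.coeff m' * matchingMoment (edgeSet m ∪ edgeSet m') := by
  conv_lhs => rw [p.as_sum, q.as_sum]
  simp only [sum_mul_sum, map_sum, monomial_mul, momentFunctional_monomial, edgeSet_add]

lemma momentFunctional_red (p : MvPolynomial (KEdge n) ℝ) :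
    momentFunctional n (red p) = momentFunctional n p := by
  simp only [red, map_sum, momentFunctional_monomial, edgeSet_sum_single, momentFunctional_eq_sum p]

lemma Emod_eq_momentFunctional (p : MvPolynomial (KEdge n) ℝ) :
    Emod n p = momentFunctional n p := by
  simp only [Emod, momentFunctional_eq_sum, matchingMoment_edgeSet]

end Polynomials

theorem mod2_pseudoexpectation_psd_general (n : ℕ) (g : MvPolynomial (KEdge n) ℝ)
    (hg : 2 * indexDeg g ≤ n) : 0 ≤ Emod n (red (g ^ 2)) := by
  have hcard (m : g.support) : 2 * #(verts (edgeSet m.1)) ≤ Fintype.card (Fin n) := by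
    rw [Fintype.card_fin]
    exact (Nat.mul_le_mul_left 2 (card_verts_edgeSet_le_indexDeg m.2)).trans hg
  calc 0 ≤ _ := (posSemidef_matchingMoment_union hcard).dotProduct_mulVec_nonneg fun m =>
        g.coeff m.1
    _ = ∑ m : g.support, ∑ m' : g.support,
          g.coeff m.1 * g.coeff m'.1 * matchingMoment (edgeSet m.1 ∪ edgeSet m'.1) := by
        simp only [dotProduct, Matrix.mulVec, mul_sum, Matrix.of_apply, Pi.star_apply, star_trivial]
        exact sum_congr rfl fun _ _ => sum_congr rfl fun _ _ => by ring
    _ = ∑ m ∈ g.support, ∑ m' ∈ g.support,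
          g.coeff m * g.coeff m' * matchingMoment (edgeSet m ∪ edgeSet m') := by
        rw [← sum_coe_sort g.support]
        exact sum_congr rfl fun m _ => sum_coe_sort g.support fun m' =>
          g.coeff m.1 * g.coeff m' * matchingMoment (edgeSet m.1 ∪ edgeSet m')
    _ = Emod n (red (g ^ 2)) := by
        rw [Emod_eq_momentFunctional, momentFunctional_red, sq, momentFunctional_mul]

theorem mod2_pseudoexpectation_psd (n : ℕ) (hn : 0 < n) (hodd : Odd n)
    (g : MvPolynomial (KEdge n) ℝ) (hg : 2 * indexDeg g ≤ n) :
    0 ≤ Emod n (red (g ^ 2)) :=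
  mod2_pseudoexpectation_psd_general n g hg
end
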